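/- arXiv:1109.6222 — 9 statements merged into one kernel-verified Lean document; each statement's English description precedes it below -/
import Mathlib

section
/- Dual formulation of analysis denoising: let D ∈ ℝ^{N×P}, y ∈ ℝ^N, λ ≥ 0. If α⋆ minimizes α ↦ ‖y + Dα‖₂² over the box {α ∈ ℝ^P : ‖α‖∞ ≤ λ}, then x⋆ = y + Dα⋆ is a global minimizer (hence the unique minimizer) of x ↦ (1/2)‖y − x‖₂² + λ‖Dᵀx‖₁ over ℝ^N. -/
/-!
Write `g = Dᵀx⋆`. First-order optimality of `α⋆` on the box is the variational inequality
`⟨x⋆, D(β - α⋆)⟩ ≥ 0` for every feasible `β`. Testing it with `β = -λ sign g` gives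
`⟨α⋆, g⟩ ≤ -λ‖g‖₁`, while `⟨α⋆, Dᵀx⟩ ≥ -λ‖Dᵀx‖₁` holds for all `x` because `‖α⋆‖∞ ≤ λ`.
Since `x⋆ - y = Dα⋆`, expanding the square around `x⋆` yields the strong-convexity bound
`f x ≥ f x⋆ + ½‖x - x⋆‖₂²`, from which both minimality and uniqueness follow.
-/

/-- The adjoint identity `⟨x, Da⟩ = ⟨a, Dᵀx⟩` in coordinates. -/
lemma sum_mul_matrix_adjoint {N P : ℕ} (D : Matrix (Fin N) (Fin P) ℝ)
    (x : Fin N → ℝ) (a : Fin P → ℝ) :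
    ∑ i, x i * ∑ j, D i j * a j = ∑ j, a j * ∑ i, D i j * x i := by
  simp only [Finset.mul_sum]
  rw [Finset.sum_comm]
  exact Finset.sum_congr rfl fun j _ => Finset.sum_congr rfl fun i _ => by ring

/-- A quadratic `2At + Bt²` that is nonnegative on `[0, 1]` has nonnegative slope at `0`. -/
lemma slope_nonneg_of_quadratic_nonneg {A B : ℝ} (hB : 0 ≤ B)
    (h : ∀ t : ℝ, 0 ≤ t → t ≤ 1 → 0 ≤ 2 * t * A + t ^ 2 * B) : 0 ≤ A := by
  by_contra! hA
  have hBA : 0 < B - A := by linarith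
  -- This `t` satisfies `t * B ≤ -A`, hence `2 * A + t * B < 0`.
  obtain ⟨t, ht⟩ : ∃ t, t = -A / (B - A) := ⟨_, rfl⟩
  have htpos : 0 < t := ht ▸ div_pos (by linarith) hBA
  have hmul : t * (B - A) = -A := by rw [ht]; field_simp
  have ht1 : t ≤ 1 := by rw [ht, div_le_one hBA]; linarith
  have h0 := h t htpos.le ht1
  nlinarith [mul_pos htpos (neg_pos.2 hA), mul_pos htpos (mul_pos htpos (neg_pos.2 hA))]

/-- The variational inequality satisfied by a minimizer of `‖y + Dα‖₂²` over the box. -/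
lemma box_variational_inequality {N P : ℕ} (D : Matrix (Fin N) (Fin P) ℝ) (y : Fin N → ℝ)
    (lam : ℝ) (a : Fin P → ℝ) (ha : ∀ j, |a j| ≤ lam)
    (hmin : ∀ α : Fin P → ℝ, (∀ j, |α j| ≤ lam) →
      ∑ i, (y i + ∑ j, D i j * a j) ^ 2 ≤ ∑ i, (y i + ∑ j, D i j * α j) ^ 2)
    (b : Fin P → ℝ) (hb : ∀ j, |b j| ≤ lam) :
    0 ≤ ∑ i, (y i + ∑ j, D i j * a j) * ∑ j, D i j * (b j - a j) := by
  refine slope_nonneg_of_quadratic_nonneg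
    (B := ∑ i, (∑ j, D i j * (b j - a j)) ^ 2) (by positivity) fun t ht0 ht1 => ?_
  have h := hmin (fun j => a j + t * (b j - a j)) fun j => by
    have h1 := abs_le.1 (ha j)
    have h2 := abs_le.1 (hb j)
    exact abs_le.2 ⟨by nlinarith, by nlinarith⟩
  have hexp : ∑ i, (y i + ∑ j, D i j * (a j + t * (b j - a j))) ^ 2
      = ∑ i, (y i + ∑ j, D i j * a j) ^ 2
        + (2 * t * ∑ i, (y i + ∑ j, D i j * a j) * ∑ j, D i j * (b j - a j)
          + t ^ 2 * ∑ i, (∑ j, D i j * (b j - a j)) ^ 2) := by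
    simp only [Finset.mul_sum (s := (Finset.univ : Finset (Fin N))), ← Finset.sum_add_distrib]
    refine Finset.sum_congr rfl fun i _ => ?_
    have : ∑ j, D i j * (a j + t * (b j - a j))
        = ∑ j, D i j * a j + t * ∑ j, D i j * (b j - a j) := by
      rw [Finset.mul_sum, ← Finset.sum_add_distrib]
      exact Finset.sum_congr rfl fun j _ => by ring
    rw [this]; ring
  rw [hexp] at h
  linarith

/-- **Dual formulation of analysis denoising.**
Let `D ∈ ℝ^{N×P}`, `y ∈ ℝ^N`, `λ ≥ 0`. If `α⋆` minimizes `α ↦ ‖y + Dα‖₂²` over the box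
`{α : ‖α‖∞ ≤ λ}`, then `x⋆ = y + Dα⋆` is a global minimizer (hence the unique minimizer)
of `x ↦ (1/2)‖y − x‖₂² + λ‖Dᵀx‖₁` over `ℝ^N`. -/
theorem analysis_denoising_dual
    (N P : ℕ) (D : Matrix (Fin N) (Fin P) ℝ) (y : Fin N → ℝ) (lam : ℝ) (hlam : 0 ≤ lam)
    (αstar : Fin P → ℝ)
    (hfeas : ∀ j, |αstar j| ≤ lam)
    (hdual : ∀ α : Fin P → ℝ, (∀ j, |α j| ≤ lam) →
      ∑ i, (y i + ∑ j, D i j * αstar j) ^ 2 ≤ ∑ i, (y i + ∑ j, D i j * α j) ^ 2)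
    (f : (Fin N → ℝ) → ℝ)
    (hf : ∀ x, f x = (1 / 2) * ∑ i, (y i - x i) ^ 2
        + lam * ∑ j, |∑ i, D i j * x i|)
    (xstar : Fin N → ℝ)
    (hxstar : ∀ i, xstar i = y i + ∑ j, D i j * αstar j) :
    (∀ x, f xstar ≤ f x) ∧ ∀ x : Fin N → ℝ, (∀ z, f x ≤ f z) → x = xstar := by
  have hadj := sum_mul_matrix_adjoint D
  have hdualpair : ∑ j, αstar j * ∑ i, D i j * xstar i
      ≤ -(lam * ∑ j, |∑ i, D i j * xstar i|) := by
    have h := box_variational_inequality D y lam αstar hfeas hdual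
      (fun j => -(lam * SignType.sign (∑ i, D i j * xstar i))) fun j => by
        rcases lt_trichotomy (∑ i, D i j * xstar i) 0 with hs | hs | hs <;>
          simp [hs, abs_of_nonneg hlam, hlam]
    simp only [← hxstar] at h
    rw [hadj] at h
    have heq : ∑ j, (-(lam * (SignType.sign (∑ i, D i j * xstar i) : ℝ)) - αstar j)
          * ∑ i, D i j * xstar i
        = -(lam * ∑ j, |∑ i, D i j * xstar i|) - ∑ j, αstar j * ∑ i, D i j * xstar i := by
      rw [Finset.mul_sum, ← Finset.sum_neg_distrib, ← Finset.sum_sub_distrib]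
      refine Finset.sum_congr rfl fun j _ => ?_
      rw [← sign_mul_self (∑ i, D i j * xstar i)]
      ring
    linarith
  have hbound : ∀ x : Fin N → ℝ, -(lam * ∑ j, |∑ i, D i j * x i|)
      ≤ ∑ j, αstar j * ∑ i, D i j * x i := fun x => by
    rw [Finset.mul_sum, ← Finset.sum_neg_distrib]
    refine Finset.sum_le_sum fun j _ => ?_
    have h1 := neg_abs_le (αstar j * ∑ i, D i j * x i)
    rw [abs_mul] at h1
    have h2 := mul_le_mul_of_nonneg_right (hfeas j) (abs_nonneg (∑ i, D i j * x i))
    linarith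
  have hstrong : ∀ x, f xstar + (1 / 2) * ∑ i, (x i - xstar i) ^ 2 ≤ f x := fun x => by
    have hexp : (1 / 2) * ∑ i, (y i - x i) ^ 2
        = (1 / 2) * ∑ i, (y i - xstar i) ^ 2 + (1 / 2) * ∑ i, (x i - xstar i) ^ 2
          + (∑ i, x i * ∑ j, D i j * αstar j - ∑ i, xstar i * ∑ j, D i j * αstar j) := by
      simp only [Finset.mul_sum (s := (Finset.univ : Finset (Fin N))),
        ← Finset.sum_add_distrib, ← Finset.sum_sub_distrib]
      refine Finset.sum_congr rfl fun i _ => ?_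
      have : ∑ j, D i j * αstar j = xstar i - y i := by rw [hxstar i]; ring
      rw [this]; ring
    rw [hadj, hadj] at hexp
    rw [hf, hf]
    linarith [hbound x]
  refine ⟨fun x => ?_, fun x hx => ?_⟩
  · have : 0 ≤ ∑ i, (x i - xstar i) ^ 2 := by positivity
    linarith [hstrong x]
  · have hle : ∑ i, (x i - xstar i) ^ 2 ≤ 0 := by linarith [hstrong x, hx xstar]
    have hzero := (Finset.sum_eq_zero_iff_of_nonneg fun i _ => sq_nonneg (x i - xstar i)).1
      (le_antisymm hle (by positivity))
    funext i
    exact sub_eq_zero.1 (pow_eq_zero_iff two_ne_zero |>.1 (hzero i (Finset.mem_univ i)))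
end

section
/- Proximity operator of the ℓ∞ norm via ℓ¹-ball projection: for every γ > 0 and every x ∈ ℝ^N, let p be the metric (Euclidean) projection of x onto the closed ℓ¹ ball {u ∈ ℝ^N : ‖u‖₁ ≤ γ}. Then x − p is the unique minimizer of z ↦ (1/2)‖z − x‖₂² + γ‖z‖∞ over ℝ^N. -/
/-!
Write `q = x - p`. The variational inequality of the projection gives `⟪q, u⟫ ≤ ⟪q, p⟫` for every
`u` in the `ℓ¹` ball (`inner_le_of_isProj`); testing it at the vertices `±γ eⱼ` yields
`γ‖q‖∞ ≤ ⟪q, p⟫` (`mul_iSup_abs_le_inner`). Together with the Hölder bound `⟪z, p⟫ ≤ γ‖z‖∞`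
(`inner_le_mul_iSup_abs`), this says that `p` is a subgradient of `γ‖·‖∞` at `q`. Expanding the square `‖z - x‖² = ‖(z - q) - p‖²`
then gives the strong convexity estimate `g q + (1/2)‖z - q‖² ≤ g z`, from which both minimality
and uniqueness follow.
-/

/-- The variational inequality characterizing the projection onto the `ℓ¹` ball, obtained by
comparing `p` with the points `p + t (u - p)` of the segment from `p` to `u`. -/
lemma inner_le_of_isProj {N : ℕ} {γ : ℝ} {x p : Fin N → ℝ}
    (hp_mem : ∑ i, |p i| ≤ γ)
    (hp_proj : ∀ u : Fin N → ℝ, ∑ i, |u i| ≤ γ →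
      ∑ i, (x i - p i) ^ 2 ≤ ∑ i, (x i - u i) ^ 2)
    {u : Fin N → ℝ} (hu : ∑ i, |u i| ≤ γ) :
    ∑ i, (x i - p i) * u i ≤ ∑ i, (x i - p i) * p i := by
  have key : ∀ t : ℝ, 0 ≤ t → t ≤ 1 →
      2 * t * ∑ i, (x i - p i) * (u i - p i) ≤ t ^ 2 * ∑ i, (u i - p i) ^ 2 := by
    intro t ht0 ht1
    have hseg : ∑ i, |p i + t * (u i - p i)| ≤ γ := by
      calc ∑ i, |p i + t * (u i - p i)| ≤ ∑ i, ((1 - t) * |p i| + t * |u i|) := by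
            refine Finset.sum_le_sum fun i _ => ?_
            have h := abs_add_le ((1 - t) * p i) (t * u i)
            rw [abs_mul, abs_mul, abs_of_nonneg ht0, abs_of_nonneg (sub_nonneg.2 ht1)] at h
            rwa [show (1 - t) * p i + t * u i = p i + t * (u i - p i) by ring] at h
        _ = (1 - t) * ∑ i, |p i| + t * ∑ i, |u i| := by
            rw [Finset.sum_add_distrib, Finset.mul_sum, Finset.mul_sum]
        _ ≤ γ := by nlinarith
    have h := hp_proj _ hseg
    have e : ∑ i, (x i - (p i + t * (u i - p i))) ^ 2 = ∑ i, (x i - p i) ^ 2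
        - 2 * t * ∑ i, (x i - p i) * (u i - p i) + t ^ 2 * ∑ i, (u i - p i) ^ 2 := by
      rw [Finset.mul_sum, Finset.mul_sum, ← Finset.sum_sub_distrib, ← Finset.sum_add_distrib]
      exact Finset.sum_congr rfl fun i _ => by ring
    linarith
  have e : ∑ i, (x i - p i) * (u i - p i)
      = ∑ i, (x i - p i) * u i - ∑ i, (x i - p i) * p i := by
    rw [← Finset.sum_sub_distrib]
    exact Finset.sum_congr rfl fun i _ => by ring
  suffices h : ∑ i, (x i - p i) * (u i - p i) ≤ 0 by linarith
  set a := ∑ i, (x i - p i) * (u i - p i)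
  set D := ∑ i, (u i - p i) ^ 2
  by_contra! ha
  rcases le_total D a with hD | hD
  · have := key 1 zero_le_one le_rfl
    linarith
  · -- `t = a / D` minimizes the quadratic `t ^ 2 * D - 2 * t * a`, with value `-a ^ 2 / D < 0`.
    have hD0 : 0 < D := ha.trans_le hD
    have h := key (a / D) (by positivity) ((div_le_one hD0).2 hD)
    have e1 : (a / D) ^ 2 * D = a / D * a := by field_simp
    have : 0 < a / D * a := by positivity
    linarith

/-- Hölder's inequality for the pair `ℓ∞`, `ℓ¹`. -/
lemma inner_le_mul_iSup_abs {N : ℕ} {γ : ℝ} {p : Fin N → ℝ} (hp_mem : ∑ i, |p i| ≤ γ)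
    (z : Fin N → ℝ) : ∑ i, z i * p i ≤ γ * ⨆ i, |z i| := by
  have h0 : 0 ≤ ⨆ i, |z i| := Real.iSup_nonneg fun i => abs_nonneg _
  calc ∑ i, z i * p i ≤ ∑ i, |p i| * ⨆ i, |z i| := by
        refine Finset.sum_le_sum fun i _ => ?_
        calc z i * p i ≤ |z i * p i| := le_abs_self _
          _ = |p i| * |z i| := by rw [abs_mul, mul_comm]
          _ ≤ _ := mul_le_mul_of_nonneg_left
            (le_ciSup (Set.finite_range fun i => |z i|).bddAbove i) (abs_nonneg _)
    _ = (∑ i, |p i|) * ⨆ i, |z i| := by rw [Finset.sum_mul]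
    _ ≤ _ := mul_le_mul_of_nonneg_right hp_mem h0

/-- An upper bound for the linear form `⟪q, ·⟫` on the `ℓ¹` ball of radius `γ` also bounds `γ‖q‖∞`,
by testing at the vertices `±γ eⱼ`. -/
lemma mul_iSup_abs_le_inner {N : ℕ} {γ : ℝ} (hγ : 0 < γ) {q : Fin N → ℝ} {c : ℝ}
    (hc : ∀ u : Fin N → ℝ, ∑ i, |u i| ≤ γ → ∑ i, q i * u i ≤ c) :
    γ * ⨆ i, |q i| ≤ c := by
  have hc0 : 0 ≤ c := by simpa using hc 0 (by simpa using hγ.le)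
  have hvert : ∀ (j : Fin N) (s : ℝ), |s| = γ → q j * s ≤ c := by
    intro j s hs
    have h := hc (Pi.single j s) (by
      rw [Finset.sum_eq_single j] <;> simp +contextual [hs])
    simpa [Pi.single_apply] using h
  rw [← le_div_iff₀' hγ]
  -- `Real.iSup_le` covers `N = 0` as well, where the supremum is the junk value `0`.
  refine Real.iSup_le (fun j => ?_) (by positivity)
  rw [le_div_iff₀' hγ]
  rcases abs_cases (q j) with ⟨h, _⟩ | ⟨h, _⟩
  · have := hvert j γ (abs_of_pos hγ)
    rw [h]; linarith
  · have := hvert j (-γ) (by rw [abs_neg, abs_of_pos hγ])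
    rw [h]; linarith

/-- **Proximity operator of the `ℓ∞` norm via `ℓ¹`-ball projection.**
For every `γ > 0` and `x ∈ ℝ^N`, if `p` is the Euclidean projection of `x` onto the closed
`ℓ¹`-ball `{u : ‖u‖₁ ≤ γ}`, then `x − p` is the unique minimizer of
`z ↦ (1/2)‖z − x‖₂² + γ‖z‖∞`. -/
theorem prox_linf_eq_sub_proj_l1
    (N : ℕ) (γ : ℝ) (hγ : 0 < γ) (x p : Fin N → ℝ)
    (hp_mem : ∑ i, |p i| ≤ γ)
    (hp_proj : ∀ u : Fin N → ℝ, ∑ i, |u i| ≤ γ →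
      ∑ i, (x i - p i) ^ 2 ≤ ∑ i, (x i - u i) ^ 2)
    (g : (Fin N → ℝ) → ℝ)
    (hg : ∀ z, g z = (1 / 2) * ∑ i, (z i - x i) ^ 2 + γ * ⨆ i, |z i|) :
    (∀ z, g (x - p) ≤ g z) ∧ ∀ z : Fin N → ℝ, (∀ w, g z ≤ g w) → z = x - p := by
  have hq : γ * ⨆ i, |(x - p) i| ≤ ∑ i, (x i - p i) * p i :=
    mul_iSup_abs_le_inner hγ fun u hu => inner_le_of_isProj hp_mem hp_proj hu
  have key : ∀ z, g (x - p) + (1 / 2) * ∑ i, (z i - (x - p) i) ^ 2 ≤ g z := by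
    intro z
    have hz := inner_le_mul_iSup_abs hp_mem z
    have e : (1 / 2) * ∑ i, (z i - x i) ^ 2 + ∑ i, z i * p i
        = (1 / 2) * ∑ i, ((x - p) i - x i) ^ 2 + ∑ i, (x i - p i) * p i
          + (1 / 2) * ∑ i, (z i - (x - p) i) ^ 2 := by
      simp only [Finset.mul_sum, ← Finset.sum_add_distrib]
      exact Finset.sum_congr rfl fun i _ => by simp only [Pi.sub_apply]; ring
    rw [hg, hg]
    linarith
  have hnn : ∀ z : Fin N → ℝ, 0 ≤ ∑ i, (z i - (x - p) i) ^ 2 := fun z =>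
    Finset.sum_nonneg fun i _ => sq_nonneg _
  refine ⟨fun z => by linarith [key z, hnn z], fun z hz => ?_⟩
  have h0 : ∑ i, (z i - (x - p) i) ^ 2 = 0 := by linarith [key z, hnn z, hz (x - p)]
  rw [Finset.sum_eq_zero_iff_of_nonneg fun i _ => sq_nonneg _] at h0
  funext i
  exact sub_eq_zero.1 (pow_eq_zero_iff two_ne_zero |>.1 (h0 i (Finset.mem_univ i)))
end

section
/- Staircase characterization of the TV identifiability criterion: let N ≥ 1, let I ⊆ {1, …, N−1} be nonempty, let s : I → {−1, +1}, and let m ∈ ℝ^{N+1} be the unique vector with m₀ = m_N = 0, m_i = s_i for i ∈ I, and m_{j−1} − 2m_j + m_{j+1} = 0 for all j ∈ J := {1, …, N−1} \ I. Call (i₁, i₂) a saturating staircase pair if i₁, i₂ ∈ I, i₂ − i₁ ≥ 2, no element of I lies strictly between i₁ and i₂, and s_{i₁} = s_{i₂}. Then: (a) if no saturating staircase pair exists, max_{j ∈ J} |m_j| < 1 (with the convention that the maximum over the empty set is 0); (b) if a saturating staircase pair (i₁, i₂) exists, then m_j = s_{i₁} for every i₁ < j < i₂, and in particular max_{j ∈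 J} |m_j| = 1. -/
/-!
Between two consecutive points `a < b` of `I ∪ {0, N}` the discrete Laplacian of `m` vanishes, so `m`
is affine there, and each `m j` with `a < j < b` is a convex combination, with strictly positive
weights, of `m a` and `m b` (`mul_eq_of_harmonic`, `exists_bracket`). The values of `m` on
`I ∪ {0, N}` lie in `{-1, 0, 1}`, hence `|m j| ≤ 1`. Equality forces `m a = m b = ±1`; then both `a`
and `b` belong to `I`, because `m` vanishes at `0` and `N`, so `(a, b)` is a saturating staircase
pair. Conversely, on such a pair the affine interpolation is constant.
-/

/-- `m : ℕ → ℝ` (viewed as the vector `(m₀, …, m_N)`) solves the discrete Poisson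
(Dirichlet) problem: zero boundary values, prescribed values `s` on `I`, and discrete
Laplacian `m_{j−1} − 2 m_j + m_{j+1}` vanishing on `{1, …, N−1} \ I`. -/
def IsDiscreteDirichletSol (N : ℕ) (I : Finset ℕ) (s : ℕ → ℝ) (m : ℕ → ℝ) : Prop :=
  m 0 = 0 ∧ m N = 0 ∧ (∀ i ∈ I, m i = s i) ∧
    ∀ j ∈ Finset.Icc 1 (N - 1), j ∉ I → m (j - 1) - 2 * m j + m (j + 1) = 0

/-- `(i₁, i₂)` is a saturating staircase pair: both in `I`, `i₂ − i₁ ≥ 2`, no element of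
`I` strictly between them, and equal signs `s i₁ = s i₂`. -/
def IsSaturatingStaircasePair (I : Finset ℕ) (s : ℕ → ℝ) (i₁ i₂ : ℕ) : Prop :=
  i₁ ∈ I ∧ i₂ ∈ I ∧ i₁ + 2 ≤ i₂ ∧ (∀ i ∈ I, ¬(i₁ < i ∧ i < i₂)) ∧ s i₁ = s i₂

/-- A sequence with vanishing discrete Laplacian strictly between `a` and `b` is an arithmetic
progression on `[a, b]`. -/
lemma eq_add_mul_of_harmonic {m : ℕ → ℝ} {a b : ℕ}
    (h : ∀ j, a < j → j < b → m (j - 1) - 2 * m j + m (j + 1) = 0) (k : ℕ) :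
    a + k ≤ b → m (a + k) = m a + k * (m (a + 1) - m a) := by
  induction k using Nat.twoStepInduction with
  | zero => simp
  | one => intro _; push_cast; ring
  | more k ih₀ ih₁ =>
    intro hk
    have h₀ := ih₀ (by omega)
    have h₁ := ih₁ (by omega)
    have h₂ := h (a + (k + 1)) (by omega) (by omega)
    rw [show a + (k + 1) - 1 = a + k by omega, show a + (k + 1) + 1 = a + (k + 2) by omega] at h₂
    push_cast at *
    linear_combination h₂ + 2 * h₁ - h₀

/-- The interpolation formula, cleared of denominators. -/
lemma mul_eq_of_harmonic {m : ℕ → ℝ} {a b j : ℕ}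
    (h : ∀ j, a < j → j < b → m (j - 1) - 2 * m j + m (j + 1) = 0) (haj : a < j) (hjb : j < b) :
    ((b : ℝ) - a) * m j = (b - j) * m a + (j - a) * m b := by
  obtain ⟨k, rfl⟩ := Nat.exists_eq_add_of_lt haj
  obtain ⟨l, rfl⟩ := Nat.exists_eq_add_of_lt hjb
  have h₁ := eq_add_mul_of_harmonic h (k + 1) (by omega)
  have h₂ := eq_add_mul_of_harmonic h (k + 1 + l + 1) (by omega)
  simp only [← add_assoc] at h₁ h₂
  rw [h₁, h₂]
  push_cast
  ring

/-- A point outside `I` lies strictly between two consecutive points of `I ∪ {0, N}`. -/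
lemma exists_bracket {N : ℕ} {I : Finset ℕ} {j : ℕ} (hj : j ∈ Finset.Icc 1 (N - 1)) (hjI : j ∉ I) :
    ∃ a b : ℕ, a < j ∧ j < b ∧ b ≤ N ∧ (a = 0 ∨ a ∈ I) ∧ (b = N ∨ b ∈ I) ∧
      ∀ i ∈ I, ¬(a < i ∧ i < b) := by
  rw [Finset.mem_Icc] at hj
  obtain ⟨a, ha, hamax⟩ := ((insert 0 I).filter (· < j)).exists_max_image id
    ⟨0, by simp; omega⟩
  obtain ⟨b, hb, hbmin⟩ := ((insert N I).filter (j < ·)).exists_min_image id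
    ⟨N, by simp; omega⟩
  simp only [Finset.mem_filter, Finset.mem_insert, id] at ha hb hamax hbmin
  refine ⟨a, b, ha.2, hb.2, hbmin N ⟨Or.inl rfl, by omega⟩, ha.1, hb.1, ?_⟩
  rintro i hi ⟨hai, hib⟩
  rcases lt_trichotomy i j with hij | rfl | hij
  · have := hamax i ⟨Or.inr hi, hij⟩
    omega
  · exact hjI hi
  · have := hbmin i ⟨Or.inr hi, hij⟩
    omega

/-- Strictness fails for a convex combination of `x, y ∈ {-1, 0, 1}` with positive weights only if
`x = y ≠ 0`. -/
lemma abs_lt_one_of_interp {p q x y z : ℝ} (hp : 0 < p) (hq : 0 < q)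
    (h : (p + q) * z = p * x + q * y) (hx : x = 0 ∨ x = 1 ∨ x = -1) (hy : y = 0 ∨ y = 1 ∨ y = -1)
    (hxy : x = y → x = 0) : |z| < 1 := by
  rw [abs_lt]
  rcases hx with rfl | rfl | rfl <;> rcases hy with rfl | rfl | rfl <;>
    first
    | (exfalso; norm_num at hxy; done)
    | (constructor <;> nlinarith)

/-- **Staircase characterization of the TV identifiability criterion.**
Let `N ≥ 1`, `∅ ≠ I ⊆ {1, …, N−1}`, `s : I → {−1, +1}` and let `m` be the solution of the
discrete Dirichlet problem. (a) If no saturating staircase pair exists, then `|m_j| < 1`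
for every `j ∈ J = {1, …, N−1} \ I` (so `max_{j ∈ J} |m_j| < 1`). (b) If `(i₁, i₂)` is a
saturating staircase pair, then `m_j = s_{i₁}` for `i₁ < j < i₂`; in particular
`max_{j ∈ J} |m_j| = 1`. -/
theorem tv_IC_staircase_characterization
    (N : ℕ) (hN : 1 ≤ N) (I : Finset ℕ) (hI : I ⊆ Finset.Icc 1 (N - 1)) (hne : I.Nonempty)
    (s : ℕ → ℝ) (hs : ∀ i ∈ I, s i = 1 ∨ s i = -1)
    (m : ℕ → ℝ) (hm : IsDiscreteDirichletSol N I s m) :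
    ((¬ ∃ i₁ i₂ : ℕ, IsSaturatingStaircasePair I s i₁ i₂) →
      ∀ j ∈ Finset.Icc 1 (N - 1), j ∉ I → |m j| < 1) ∧
    (∀ i₁ i₂ : ℕ, IsSaturatingStaircasePair I s i₁ i₂ →
      (∀ j : ℕ, i₁ < j → j < i₂ → m j = s i₁) ∧
      (∀ j ∈ Finset.Icc 1 (N - 1), j ∉ I → |m j| ≤ 1) ∧
      (∃ j ∈ Finset.Icc 1 (N - 1), j ∉ I ∧ |m j| = 1)) := by
  obtain ⟨h0, hN0, hmI, hΔ⟩ := hm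
  have hIle : ∀ i ∈ I, 1 ≤ i ∧ i ≤ N - 1 := fun i hi ↦ Finset.mem_Icc.mp (hI hi)
  have hval : ∀ i, (i = 0 ∨ i = N ∨ i ∈ I) → m i = 0 ∨ m i = 1 ∨ m i = -1 := by
    rintro i (rfl | rfl | hi)
    · exact Or.inl h0
    · exact Or.inl hN0
    · rw [hmI i hi]
      exact Or.inr (hs i hi)
  have hharm : ∀ a b, b ≤ N → (∀ i ∈ I, ¬(a < i ∧ i < b)) →
      ∀ j, a < j → j < b → m (j - 1) - 2 * m j + m (j + 1) = 0 := fun a b hbN hab j haj hjb ↦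
    hΔ j (Finset.mem_Icc.mpr ⟨by omega, by omega⟩) fun hj ↦ hab j hj ⟨haj, hjb⟩
  have hconst : ∀ i₁ i₂, IsSaturatingStaircasePair I s i₁ i₂ →
      ∀ j, i₁ < j → j < i₂ → m j = s i₁ := by
    rintro i₁ i₂ ⟨h₁, h₂, -, hgap, heq⟩ j hj₁ hj₂
    have hb := hIle i₂ h₂
    have key := mul_eq_of_harmonic (hharm i₁ i₂ (by omega) hgap) hj₁ hj₂
    rw [hmI i₁ h₁, hmI i₂ h₂, ← heq] at key
    have hlt : (i₁ : ℝ) < i₂ := by exact_mod_cast hj₁.trans hj₂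
    exact mul_left_cancel₀ (sub_pos.mpr hlt).ne' (by linear_combination key)
  have habs : ∀ i ∈ I, |s i| = 1 := fun i hi ↦ by
    rcases hs i hi with h | h <;> simp [h]
  have hdich : ∀ j ∈ Finset.Icc 1 (N - 1), j ∉ I → |m j| < 1 ∨
      ∃ a b, IsSaturatingStaircasePair I s a b ∧ a < j ∧ j < b := by
    intro j hj hjI
    obtain ⟨a, b, haj, hjb, hbN, ha, hb, hgap⟩ := exists_bracket hj hjI
    by_cases hab : m a = m b ∧ m a ≠ 0
    · right
      have haI : a ∈ I := ha.resolve_left fun h ↦ hab.2 (h ▸ h0)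
      have hbI : b ∈ I := hb.resolve_left fun h ↦ hab.2 (hab.1.trans (h ▸ hN0))
      exact ⟨a, b, ⟨haI, hbI, by omega, hgap, by rw [← hmI a haI, ← hmI b hbI, hab.1]⟩, haj, hjb⟩
    · left
      have key := mul_eq_of_harmonic (hharm a b hbN hgap) haj hjb
      have haj' : (a : ℝ) < j := by exact_mod_cast haj
      have hjb' : (j : ℝ) < b := by exact_mod_cast hjb
      refine abs_lt_one_of_interp (p := b - j) (q := j - a) (sub_pos.mpr hjb') (sub_pos.mpr haj')
        (by linear_combination key) (hval a (by tauto)) (hval b (by tauto)) ?_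
      intro h
      by_contra h'
      exact hab ⟨h, h'⟩
  refine ⟨fun hno j hj hjI ↦ (hdich j hj hjI).resolve_right ?_, fun i₁ i₂ hp ↦
    ⟨hconst i₁ i₂ hp, ?_, ?_⟩⟩
  · rintro ⟨a, b, hab, -⟩
    exact hno ⟨a, b, hab⟩
  · intro j hj hjI
    rcases hdich j hj hjI with h | ⟨a, b, hab, haj, hjb⟩
    · exact h.le
    · rw [hconst a b hab j haj hjb, habs a hab.1]
  · have hp' := hp
    obtain ⟨h₁, h₂, hlen, hgap, -⟩ := hp'
    have hb := hIle i₂ h₂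
    refine ⟨i₁ + 1, Finset.mem_Icc.mpr ⟨by omega, by omega⟩,
      fun h ↦ hgap _ h ⟨by omega, by omega⟩, ?_⟩
    rw [hconst i₁ i₂ hp (i₁ + 1) (by omega) (by omega), habs i₁ h₁]
end

section
/- TV denoising of the perturbed staircase, ε > 0, small λ regime: let M ≥ 1, N = 4M, 0 < ε < 1, and let y ∈ ℝ^N equal −1 on l₁, −ε on l₂, ε on l₃ and 1 on l₄. For every λ with 0 ≤ λ ≤ M(1 − ε), the unique minimizer of f_λ(x) = (1/2)‖y − x‖₂² + λ Σ_{i=1}^{N−1}|x_{i+1} − x_i| is the vector x_λ⋆ equal to −1 + λ/M on l₁, −ε on l₂, ε on l₃, and 1 − λ/M on l₄. -/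
/-!
Optimality is certified by duality. Put `w i = i / M` on the first block, `w i = 1` on the two
middle blocks and `w i = (4M - i) / M` on the last one. Then `|w i| ≤ 1`, `w` vanishes at `0` and
at `4M`, and the residual of the candidate is a divergence: `y i - xs i = -λ (w i - w (i - 1))`.
Moreover `w i * (xs (i + 1) - xs i) = |xs (i + 1) - xs i|`, because `xs` jumps only at
`i = M, 2M, 3M`, where `w i = 1`, and all jumps are nonnegative (at `M` and `3M` this is
`λ ≤ M (1 - ε)`). Summation by parts (`tv_sum_by_parts`) then says that the residual is `λ` times a
subgradient of the total variation at `xs`, which gives the quadratic growth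
`f xs + ‖x - xs‖² / 2 ≤ f x` (`tv_growth_of_certificate`); both minimality and uniqueness follow.
-/

/-- Summation by parts for a sequence `w` with `w 0 = 0`. -/
lemma tv_sum_by_parts (w z : ℕ → ℝ) (h0 : w 0 = 0) (n : ℕ) :
    ∑ i ∈ Finset.Icc 1 (n + 1), (w i - w (i - 1)) * z i
      = w (n + 1) * z (n + 1) - ∑ i ∈ Finset.Icc 1 n, w i * (z (i + 1) - z i) := by
  induction n with
  | zero => simp [h0]
  | succ n ih =>
    rw [Finset.sum_Icc_succ_top (by omega), ih, Finset.sum_Icc_succ_top (b := n) (by omega)]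
    simp only [Nat.add_sub_cancel]
    ring

/-- A dual certificate `w` for `p` makes the TV-denoising objective with data `y` grow at least
quadratically away from `p`. -/
lemma tv_growth_of_certificate (n : ℕ) (lam : ℝ) (hlam : 0 ≤ lam) (y p w x : ℕ → ℝ)
    (h0 : w 0 = 0) (hn : w (n + 1) = 0)
    (hres : ∀ i ∈ Finset.Icc 1 (n + 1), y i - p i = -lam * (w i - w (i - 1)))
    (hw : ∀ i ∈ Finset.Icc 1 n, |w i| ≤ 1)
    (hp : ∀ i ∈ Finset.Icc 1 n, w i * (p (i + 1) - p i) = |p (i + 1) - p i|) :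
    (1 / 2) * ∑ i ∈ Finset.Icc 1 (n + 1), (y i - p i) ^ 2
        + lam * ∑ i ∈ Finset.Icc 1 n, |p (i + 1) - p i|
        + (1 / 2) * ∑ i ∈ Finset.Icc 1 (n + 1), (x i - p i) ^ 2
      ≤ (1 / 2) * ∑ i ∈ Finset.Icc 1 (n + 1), (y i - x i) ^ 2
        + lam * ∑ i ∈ Finset.Icc 1 n, |x (i + 1) - x i| := by
  have hpair : ∀ z : ℕ → ℝ, ∑ i ∈ Finset.Icc 1 (n + 1), (y i - p i) * z i
      = lam * ∑ i ∈ Finset.Icc 1 n, w i * (z (i + 1) - z i) := by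
    intro z
    have h := tv_sum_by_parts w z h0 n
    rw [hn] at h
    have h2 : ∑ i ∈ Finset.Icc 1 (n + 1), (y i - p i) * z i
        = -lam * ∑ i ∈ Finset.Icc 1 (n + 1), (w i - w (i - 1)) * z i := by
      rw [Finset.mul_sum]
      refine Finset.sum_congr rfl fun i hi => ?_
      rw [hres i hi]
      ring
    rw [h2, h]
    ring
  have hx : ∑ i ∈ Finset.Icc 1 n, w i * (x (i + 1) - x i)
      ≤ ∑ i ∈ Finset.Icc 1 n, |x (i + 1) - x i| := by
    refine Finset.sum_le_sum fun i hi => (le_abs_self _).trans ?_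
    rw [abs_mul]
    exact mul_le_of_le_one_left (abs_nonneg _) (hw i hi)
  have hsq : ∑ i ∈ Finset.Icc 1 (n + 1), (y i - x i) ^ 2
      = ∑ i ∈ Finset.Icc 1 (n + 1), (y i - p i) ^ 2
        + ∑ i ∈ Finset.Icc 1 (n + 1), (x i - p i) ^ 2
        - 2 * (∑ i ∈ Finset.Icc 1 (n + 1), (y i - p i) * x i
          - ∑ i ∈ Finset.Icc 1 (n + 1), (y i - p i) * p i) := by
    rw [← Finset.sum_sub_distrib, Finset.mul_sum, ← Finset.sum_add_distrib,
      ← Finset.sum_sub_distrib]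
    exact Finset.sum_congr rfl fun i _ => by ring
  rw [hsq, hpair x, hpair p, Finset.sum_congr rfl hp]
  linarith [mul_le_mul_of_nonneg_left hx hlam]

/-- The dual certificate of the staircase: it ramps up from `0` to `1` on the first block, equals
`1` on the middle blocks, and ramps down to `0` on the last block. -/
noncomputable def tvCert (M : ℕ) (i : ℕ) : ℝ :=
  if i ≤ M then (i : ℝ) / M else if i ≤ 3 * M then 1 else (4 * M - i : ℝ) / M

lemma abs_tvCert_le_one (M i : ℕ) (hM : 1 ≤ M) (hi : i ≤ 4 * M) : |tvCert M i| ≤ 1 := by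
  have hM0 : (0 : ℝ) < M := by exact_mod_cast hM
  have hi' : (i : ℝ) ≤ 4 * M := by exact_mod_cast hi
  unfold tvCert
  split_ifs with h1 h2
  · have h1' : (i : ℝ) ≤ M := by exact_mod_cast h1
    rw [abs_of_nonneg (by positivity), div_le_one hM0]
    exact h1'
  · simp
  · have h2' : (3 * M : ℝ) ≤ i := by exact_mod_cast (not_le.mp h2).le
    rw [abs_of_nonneg (div_nonneg (by linarith) hM0.le), div_le_one hM0]
    linarith

/-- The discrete derivative of the certificate is `1 / M`, `0`, `-1 / M` on the first block, the
middle blocks and the last block respectively. -/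
lemma tvCert_sub (M i : ℕ) (hM : 1 ≤ M) (hi : 1 ≤ i) :
    tvCert M i - tvCert M (i - 1)
      = if i ≤ M then 1 / (M : ℝ) else if i ≤ 3 * M then 0 else -(1 / (M : ℝ)) := by
  have hM0 : (M : ℝ) ≠ 0 := by positivity
  obtain ⟨j, rfl⟩ : ∃ j, i = j + 1 := ⟨i - 1, by omega⟩
  simp only [tvCert, Nat.add_sub_cancel]
  rcases lt_trichotomy j M with h | rfl | h
  · rw [if_pos (by omega), if_pos (by omega), if_pos (by omega)]
    push_cast
    field_simp
    ring
  · rw [if_neg (by omega), if_pos (by omega), if_pos le_rfl, if_neg (by omega),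
      if_pos (by omega)]
    field_simp
    ring
  · rcases lt_trichotomy j (3 * M) with h' | rfl | h'
    · rw [if_neg (by omega), if_pos (by omega), if_neg (by omega), if_pos (by omega),
        if_neg (by omega), if_pos (by omega)]
      ring
    · rw [if_neg (by omega), if_neg (by omega), if_neg (by omega), if_pos (by omega),
        if_neg (by omega), if_neg (by omega)]
      push_cast
      field_simp
      ring
    · rw [if_neg (by omega), if_neg (by omega), if_neg (by omega), if_neg (by omega),
        if_neg (by omega), if_neg (by omega)]
      push_cast
      field_simp
      ring

/-- **TV denoising of the perturbed staircase, `ε > 0`, small `λ` regime.**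
`N = 4M`, blocks `l_k = {(k−1)M+1, …, kM}` (signals are indexed by `{1, …, N}`),
`y = −1` on `l₁`, `−ε` on `l₂`, `ε` on `l₃`, `1` on `l₄`. For `0 ≤ λ ≤ M(1 − ε)`, the
unique minimizer of `f_λ(x) = (1/2)‖y − x‖₂² + λ Σ_{i=1}^{N−1}|x_{i+1} − x_i|` equals
`−1 + λ/M` on `l₁`, `−ε` on `l₂`, `ε` on `l₃` and `1 − λ/M` on `l₄`. -/
theorem tv_staircase_pos_eps_small_lambda
    (M : ℕ) (hM : 1 ≤ M) (ε : ℝ) (hε0 : 0 < ε) (hε1 : ε < 1)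
    (y : ℕ → ℝ)
    (hy : ∀ i ∈ Finset.Icc 1 (4 * M),
      y i = if i ≤ M then -1 else if i ≤ 2 * M then -ε else if i ≤ 3 * M then ε else 1)
    (lam : ℝ) (hlam0 : 0 ≤ lam) (hlam1 : lam ≤ M * (1 - ε))
    (f : (ℕ → ℝ) → ℝ)
    (hf : ∀ x, f x = (1 / 2) * ∑ i ∈ Finset.Icc 1 (4 * M), (y i - x i) ^ 2
        + lam * ∑ i ∈ Finset.Icc 1 (4 * M - 1), |x (i + 1) - x i|)
    (xs : ℕ → ℝ)
    (hxs : ∀ i ∈ Finset.Icc 1 (4 * M),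
      xs i = if i ≤ M then -1 + lam / M else if i ≤ 2 * M then -ε
        else if i ≤ 3 * M then ε else 1 - lam / M) :
    (∀ x, f xs ≤ f x) ∧
      ∀ x : ℕ → ℝ, (∀ z, f x ≤ f z) → ∀ i ∈ Finset.Icc 1 (4 * M), x i = xs i := by
  have hM0 : (0 : ℝ) < M := by exact_mod_cast hM
  have hlamM : lam / M ≤ 1 - ε := by
    rw [div_le_iff₀ hM0]
    linarith
  obtain ⟨n, hn⟩ : ∃ n, 4 * M = n + 1 := ⟨4 * M - 1, by omega⟩
  have hn' : 4 * M - 1 = n := by omega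
  have hgrowth : ∀ x, f xs + (1 / 2) * ∑ i ∈ Finset.Icc 1 (4 * M), (x i - xs i) ^ 2 ≤ f x := by
    intro x
    rw [hf, hf, hn', hn]
    apply tv_growth_of_certificate n lam hlam0 y xs (tvCert M) x
    · simp [tvCert]
    · rw [← hn]
      have h1 : ¬ 4 * M ≤ M := by omega
      have h2 : ¬ 4 * M ≤ 3 * M := by omega
      simp [tvCert, h1, h2]
    · intro i hi
      rw [← hn] at hi
      rw [hy i hi, hxs i hi, tvCert_sub M i hM (Finset.mem_Icc.mp hi).1]
      split_ifs <;> first | omega | ring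
    · intro i hi
      exact abs_tvCert_le_one M i hM (by have := Finset.mem_Icc.mp hi; omega)
    · intro i hi
      obtain ⟨hi1, hi2⟩ := Finset.mem_Icc.mp hi
      have hmono : 0 ≤ xs (i + 1) - xs i := by
        rw [hxs i (Finset.mem_Icc.mpr ⟨by omega, by omega⟩),
          hxs (i + 1) (Finset.mem_Icc.mpr ⟨by omega, by omega⟩)]
        split_ifs <;> first | omega | linarith
      rw [abs_of_nonneg hmono]
      -- Off the plateau `M ≤ i ≤ 3M`, both `i` and `i + 1` lie in the same block.
      by_cases hpl : M ≤ i ∧ i ≤ 3 * M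
      · have h1 : tvCert M i = 1 := by
          unfold tvCert
          split_ifs with h1 h2
          · rw [le_antisymm h1 hpl.1, div_self hM0.ne']
          · rfl
          · omega
        rw [h1, one_mul]
      · have h0 : xs (i + 1) - xs i = 0 := by
          rw [hxs i (Finset.mem_Icc.mpr ⟨by omega, by omega⟩),
            hxs (i + 1) (Finset.mem_Icc.mpr ⟨by omega, by omega⟩)]
          split_ifs <;> first | omega | ring
        rw [h0, mul_zero]
  refine ⟨fun x => ?_, fun x hx i hi => ?_⟩
  · have hnn : 0 ≤ ∑ i ∈ Finset.Icc 1 (4 * M), (x i - xs i) ^ 2 :=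
      Finset.sum_nonneg fun i _ => sq_nonneg _
    linarith [hgrowth x]
  · have hle : (x i - xs i) ^ 2 ≤ ∑ i ∈ Finset.Icc 1 (4 * M), (x i - xs i) ^ 2 :=
      Finset.single_le_sum (f := fun i => (x i - xs i) ^ 2) (fun i _ => sq_nonneg _) hi
    have hsq : (x i - xs i) ^ 2 = 0 :=
      le_antisymm (by linarith [hgrowth x, hx xs]) (sq_nonneg _)
    exact sub_eq_zero.mp (pow_eq_zero_iff two_ne_zero |>.mp hsq)
end

section
/- TV denoising of the perturbed staircase, ε > 0, intermediate λ regime: let M ≥ 1, N = 4M, 0 < ε < 1, λ₁ = M(1 − ε), λ₂ = M(1 + ε), and let y ∈ ℝ^N equal −1 on l₁, −ε on l₂, ε on l₃ and 1 on l₄. For every λ with λ₁ ≤ λ ≤ λ₂, the unique minimizer of f_λ(x) = (1/2)‖y − x‖₂² + λ Σ_{i=1}^{N−1}|x_{i+1} − x_i| is the vector x_λ⋆ equal to −ε + (λ − λ₁)/(2M) on l₁ ∪ l₂ and ε − (λ − λ₁)/(2M) on l₃ ∪ l₄. -/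
/-!
The proof exhibits a dual certificate. Let `U i` be the partial sums of the residual `y - xs`.
With `a = (λ - λ₁)/(2M) ≥ 0` and `b = a + (1 - ε)`, the residual takes the values `-b, -a, a, b` on
the four blocks, so `U` goes down from `U 0 = 0` to `U (2M) = -M(a + b) = -λ` and back up to
`U (4M) = 0`; in particular `|U| ≤ λ`. The only jump of `xs` is at `2M`, where it is upward because
`a ≤ ε`, that is `λ ≤ λ₂`, and there `U` attains `-λ`. These are the optimality conditions for TV
denoising: summation by parts (`tv_abel`) turns them into the quadratic growth inequality
`f xs + ½‖x - xs‖² ≤ f x` (`tv_growth`), which gives minimality and uniqueness at once.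
-/

theorem tv_abel (U h : ℕ → ℝ) (m : ℕ) :
    ∑ i ∈ Finset.Icc 1 (m + 1), (U i - U (i - 1)) * h i
      = U (m + 1) * h (m + 1) - U 0 * h 1 - ∑ i ∈ Finset.Icc 1 m, U i * (h (i + 1) - h i) := by
  induction m with
  | zero => simp; ring
  | succ k ih =>
    rw [Finset.sum_Icc_succ_top (by omega), ih, Finset.sum_Icc_succ_top (by omega)]
    simp only [Nat.add_sub_cancel]
    ring

/-- Sufficient optimality conditions for TV denoising, with quadratic growth: `U` plays the role of
the dual variable, bounded by `lam` and equal to `-lam * sign` at the jumps of `xs`. -/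
theorem tv_growth (m : ℕ) (lam : ℝ) (y xs U : ℕ → ℝ)
    (hU0 : U 0 = 0) (hUn : U (m + 1) = 0)
    (hres : ∀ i ∈ Finset.Icc 1 (m + 1), y i - xs i = U i - U (i - 1))
    (hbd : ∀ i ∈ Finset.Icc 1 m, |U i| ≤ lam)
    (hjump : ∀ i ∈ Finset.Icc 1 m, U i * (xs (i + 1) - xs i) = -(lam * |xs (i + 1) - xs i|))
    (x : ℕ → ℝ) :
    (1 / 2) * ∑ i ∈ Finset.Icc 1 (m + 1), (y i - xs i) ^ 2
        + lam * ∑ i ∈ Finset.Icc 1 m, |xs (i + 1) - xs i|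
        + (1 / 2) * ∑ i ∈ Finset.Icc 1 (m + 1), (x i - xs i) ^ 2
      ≤ (1 / 2) * ∑ i ∈ Finset.Icc 1 (m + 1), (y i - x i) ^ 2
        + lam * ∑ i ∈ Finset.Icc 1 m, |x (i + 1) - x i| := by
  have hsq : ∑ i ∈ Finset.Icc 1 (m + 1), (y i - x i) ^ 2
      = ∑ i ∈ Finset.Icc 1 (m + 1), (y i - xs i) ^ 2
        + ∑ i ∈ Finset.Icc 1 (m + 1), (x i - xs i) ^ 2
        - 2 * ∑ i ∈ Finset.Icc 1 (m + 1), (U i - U (i - 1)) * (x i - xs i) := by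
    rw [Finset.mul_sum, ← Finset.sum_add_distrib, ← Finset.sum_sub_distrib]
    refine Finset.sum_congr rfl fun i hi => ?_
    rw [← hres i hi]
    ring
  have habel := tv_abel U (fun i => x i - xs i) m
  simp only [hU0, hUn] at habel
  have hkey : lam * ∑ i ∈ Finset.Icc 1 m, |xs (i + 1) - xs i|
      ≤ lam * ∑ i ∈ Finset.Icc 1 m, |x (i + 1) - x i|
        + ∑ i ∈ Finset.Icc 1 m, U i * (x (i + 1) - xs (i + 1) - (x i - xs i)) := by
    rw [Finset.mul_sum, Finset.mul_sum, ← Finset.sum_add_distrib]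
    refine Finset.sum_le_sum fun i hi => ?_
    have h1 : -(lam * |x (i + 1) - x i|) ≤ U i * (x (i + 1) - x i) := by
      have h2 := neg_abs_le (U i * (x (i + 1) - x i))
      have h3 := mul_le_mul_of_nonneg_right (hbd i hi) (abs_nonneg (x (i + 1) - x i))
      rw [abs_mul] at h2
      linarith
    linarith [hjump i hi]
  linarith

/-- The dual certificate for the staircase: the partial sums of a residual equal to `-b, -a, a, b`
on the four consecutive blocks of length `M`. -/
noncomputable def stairDual (M : ℕ) (a b : ℝ) (i : ℕ) : ℝ :=
  if i ≤ M then -(b * i)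
  else if i ≤ 2 * M then -(b * M + a * (i - M))
  else if i ≤ 3 * M then -(b * M + a * (3 * M - i))
  else -(b * (4 * M - i))

theorem stairDual_step (M : ℕ) (hM : 1 ≤ M) (a b : ℝ) (i : ℕ) (hi : 1 ≤ i) :
    stairDual M a b i - stairDual M a b (i - 1)
      = if i ≤ M then -b else if i ≤ 2 * M then -a else if i ≤ 3 * M then a else b := by
  obtain ⟨j, rfl⟩ : ∃ j, i = j + 1 := ⟨i - 1, by omega⟩
  simp only [Nat.add_sub_cancel, stairDual]
  -- At a block boundary the two formulas for the left endpoint agree.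
  split_ifs <;> first
    | omega
    | (push_cast; ring1)
    | (obtain rfl : j = M := by omega
       push_cast; ring1)
    | (obtain rfl : j = 2 * M := by omega
       push_cast; ring1)
    | (obtain rfl : j = 3 * M := by omega
       push_cast; ring1)

theorem abs_stairDual_le (M : ℕ) (a b : ℝ) (ha : 0 ≤ a) (hb : 0 ≤ b) (i : ℕ) (hi : i ≤ 4 * M) :
    |stairDual M a b i| ≤ M * (a + b) := by
  have hM : (0 : ℝ) ≤ M := Nat.cast_nonneg M
  have hi' : (i : ℝ) ≤ 4 * M := by exact_mod_cast hi
  have hi0 : (0 : ℝ) ≤ i := Nat.cast_nonneg i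
  have haM := mul_nonneg ha hM
  have hbM := mul_nonneg hb hM
  unfold stairDual
  split_ifs with h1 h2 h3
  · have h : (i : ℝ) ≤ M := by exact_mod_cast h1
    rw [abs_neg, abs_of_nonneg (by positivity)]
    nlinarith
  · have h : (i : ℝ) ≤ 2 * M := by exact_mod_cast h2
    have h' : (M : ℝ) ≤ i := by exact_mod_cast (not_le.mp h1).le
    have := mul_nonneg ha (sub_nonneg.2 h')
    rw [abs_neg, abs_of_nonneg (by linarith)]
    nlinarith
  · have h : (i : ℝ) ≤ 3 * M := by exact_mod_cast h3
    have h' : 2 * (M : ℝ) ≤ i := by exact_mod_cast (not_le.mp h2).le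
    have := mul_nonneg ha (sub_nonneg.2 h)
    rw [abs_neg, abs_of_nonneg (by linarith)]
    nlinarith
  · have h' : 3 * (M : ℝ) ≤ i := by exact_mod_cast (not_le.mp h3).le
    have := mul_nonneg hb (sub_nonneg.2 hi')
    rw [abs_neg, abs_of_nonneg this]
    nlinarith

/-- **TV denoising of the perturbed staircase, `ε > 0`, intermediate `λ` regime.**
`N = 4M`, blocks `l_k = {(k−1)M+1, …, kM}` (signals are indexed by `{1, …, N}`),
`y = −1` on `l₁`, `−ε` on `l₂`, `ε` on `l₃`, `1` on `l₄`, `λ₁ = M(1 − ε)`,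
`λ₂ = M(1 + ε)`. For `λ₁ ≤ λ ≤ λ₂`, the unique minimizer of
`f_λ(x) = (1/2)‖y − x‖₂² + λ Σ_{i=1}^{N−1}|x_{i+1} − x_i|` equals
`−ε + (λ − λ₁)/(2M)` on `l₁ ∪ l₂` and `ε − (λ − λ₁)/(2M)` on `l₃ ∪ l₄`. -/
theorem tv_staircase_pos_eps_mid_lambda
    (M : ℕ) (hM : 1 ≤ M) (ε : ℝ) (hε0 : 0 < ε) (hε1 : ε < 1)
    (y : ℕ → ℝ)
    (hy : ∀ i ∈ Finset.Icc 1 (4 * M),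
      y i = if i ≤ M then -1 else if i ≤ 2 * M then -ε else if i ≤ 3 * M then ε else 1)
    (lam : ℝ) (hlam0 : M * (1 - ε) ≤ lam) (hlam1 : lam ≤ M * (1 + ε))
    (f : (ℕ → ℝ) → ℝ)
    (hf : ∀ x, f x = (1 / 2) * ∑ i ∈ Finset.Icc 1 (4 * M), (y i - x i) ^ 2
        + lam * ∑ i ∈ Finset.Icc 1 (4 * M - 1), |x (i + 1) - x i|)
    (xs : ℕ → ℝ)
    (hxs : ∀ i ∈ Finset.Icc 1 (4 * M),
      xs i = if i ≤ 2 * M then -ε + (lam - M * (1 - ε)) / (2 * M)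
        else ε - (lam - M * (1 - ε)) / (2 * M)) :
    (∀ x, f xs ≤ f x) ∧
      ∀ x : ℕ → ℝ, (∀ z, f x ≤ f z) → ∀ i ∈ Finset.Icc 1 (4 * M), x i = xs i := by
  have hM0 : (0 : ℝ) < M := by exact_mod_cast hM
  set a : ℝ := (lam - M * (1 - ε)) / (2 * M) with ha_def
  have haM : a * (2 * M) = lam - M * (1 - ε) := by
    rw [ha_def]
    field_simp
  have ha : 0 ≤ a := div_nonneg (by linarith) (by positivity)
  have haε : a ≤ ε := by
    rw [ha_def, div_le_iff₀ (by positivity)]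
    linarith
  have hlam : M * (a + (a + (1 - ε))) = lam := by linarith
  obtain ⟨m, hm⟩ : ∃ m, 4 * M = m + 1 := ⟨4 * M - 1, by omega⟩
  have hgrow : ∀ x, f xs + (1 / 2) * ∑ i ∈ Finset.Icc 1 (4 * M), (x i - xs i) ^ 2 ≤ f x := by
    intro x
    rw [hf, hf, hm, Nat.add_sub_cancel]
    refine tv_growth m lam y xs (stairDual M a (a + (1 - ε))) ?_ ?_ ?_ ?_ ?_ x
    · simp [stairDual]
    · rw [← hm, stairDual, if_neg (by omega), if_neg (by omega), if_neg (by omega)]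
      push_cast
      ring
    · intro i hi
      rw [← hm] at hi
      rw [hy i hi, hxs i hi, stairDual_step _ hM _ _ _ (Finset.mem_Icc.1 hi).1]
      split_ifs <;> first | omega | ring
    · intro i hi
      have := (Finset.mem_Icc.1 hi).2
      rw [← hlam]
      exact abs_stairDual_le M a _ ha (by linarith) i (by omega)
    · intro i hi
      have hi' := Finset.mem_Icc.1 hi
      rw [hxs i (Finset.mem_Icc.2 (by omega)), hxs (i + 1) (Finset.mem_Icc.2 (by omega))]
      rcases lt_trichotomy i (2 * M) with h | h | h
      · rw [if_pos (by omega), if_pos (by omega)]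
        simp
      · rw [if_neg (by omega), if_pos (by omega), abs_of_nonneg (by linarith), h, stairDual,
          if_neg (by omega), if_pos (by omega), ← hlam]
        push_cast
        ring
      · rw [if_neg (by omega), if_neg (by omega)]
        simp
  refine ⟨fun x => ?_, fun x hx i hi => ?_⟩
  · have h := hgrow x
    have : 0 ≤ ∑ i ∈ Finset.Icc 1 (4 * M), (x i - xs i) ^ 2 :=
      Finset.sum_nonneg fun i _ => sq_nonneg _
    linarith
  · have h := hgrow x
    have h1 := Finset.single_le_sum (f := fun i => (x i - xs i) ^ 2)
      (fun i _ => sq_nonneg _) hi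
    have h2 := hx xs
    have h3 : (x i - xs i) ^ 2 = 0 := le_antisymm (by linarith) (sq_nonneg _)
    exact sub_eq_zero.1 (pow_eq_zero_iff two_ne_zero |>.1 h3)
end

section
/- TV denoising of the perturbed staircase, ε > 0, large λ regime: let M ≥ 1, N = 4M, 0 < ε < 1, and let y ∈ ℝ^N equal −1 on l₁, −ε on l₂, ε on l₃ and 1 on l₄. For every λ ≥ M(1 + ε), the unique minimizer of f_λ(x) = (1/2)‖y − x‖₂² + λ Σ_{i=1}^{N−1}|x_{i+1} − x_i| is x_λ⋆ = 0. -/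
/-!
The proof is a dual certificate. Let `S k = y 1 + ⋯ + y k`. The staircase is antisymmetric, so
`S (4M) = 0`, and `S` decreases to its extreme value `-M(1 + ε)` at `k = 2M` before climbing back,
so `|S k| ≤ M(1 + ε) ≤ λ` throughout (`abs_sum_staircase_le`, from the closed form of `S`).
Summation by parts (`sum_mul_by_parts`) then gives
`∑ y i * x i = -∑ S i * (x (i + 1) - x i) ≤ λ ∑ |x (i + 1) - x i|`, and expanding the square yields
`f x - f 0 ≥ (1/2) ∑ (x i)²`, which gives both minimality of `0` and uniqueness.
-/

/-- Closed form of the partial sums of the perturbed staircase. -/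
theorem sum_staircase (M : ℕ) (ε : ℝ) (y : ℕ → ℝ)
    (hy : ∀ i ∈ Finset.Icc 1 (4 * M),
      y i = if i ≤ M then -1 else if i ≤ 2 * M then -ε else if i ≤ 3 * M then ε else 1)
    (n : ℕ) (hn : n ≤ 4 * M) :
    ∑ i ∈ Finset.Icc 1 n, y i =
      if n ≤ M then -(n : ℝ) else if n ≤ 2 * M then -M - ε * (n - M)
        else if n ≤ 3 * M then -M - ε * (3 * M - n) else (n : ℝ) - 4 * M := by
  induction n with
  | zero => simp
  | succ k ih =>
    rw [Finset.sum_Icc_succ_top (by omega), ih (by omega),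
      hy (k + 1) (Finset.mem_Icc.2 ⟨by omega, hn⟩)]
    push_cast
    -- At a block boundary the formula for `k` and the one for `k + 1` come from different pieces.
    split_ifs <;> first
      | omega
      | ring1
      | (have hk : k = M := by omega
         subst hk
         ring1)
      | (have hk : k = 2 * M := by omega
         subst hk
         push_cast
         ring1)
      | (have hk : k = 3 * M := by omega
         subst hk
         push_cast
         ring1)

theorem abs_sum_staircase_le (M : ℕ) (ε : ℝ) (hε0 : 0 < ε) (y : ℕ → ℝ)
    (hy : ∀ i ∈ Finset.Icc 1 (4 * M),
      y i = if i ≤ M then -1 else if i ≤ 2 * M then -ε else if i ≤ 3 * M then ε else 1)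
    (n : ℕ) (hn : n ≤ 4 * M) :
    |∑ i ∈ Finset.Icc 1 n, y i| ≤ M * (1 + ε) := by
  rw [sum_staircase M ε y hy n hn, abs_le]
  have hM0 : (0 : ℝ) ≤ M := Nat.cast_nonneg M
  have hεM : 0 ≤ ε * M := by positivity
  have hn0 : (0 : ℝ) ≤ n := Nat.cast_nonneg n
  have hn' : (n : ℝ) ≤ 4 * M := by exact_mod_cast hn
  split_ifs with h1 h2 h3
  · have h1' : (n : ℝ) ≤ M := by exact_mod_cast h1
    constructor <;> linarith
  · have a : (M : ℝ) ≤ n := by exact_mod_cast (by omega : M ≤ n)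
    have b : (n : ℝ) ≤ 2 * M := by exact_mod_cast h2
    constructor <;>
      linarith [mul_nonneg hε0.le (sub_nonneg.2 a), mul_nonneg hε0.le (sub_nonneg.2 b)]
  · have a : 2 * (M : ℝ) ≤ n := by exact_mod_cast (by omega : 2 * M ≤ n)
    have b : (n : ℝ) ≤ 3 * M := by exact_mod_cast h3
    constructor <;>
      linarith [mul_nonneg hε0.le (sub_nonneg.2 a), mul_nonneg hε0.le (sub_nonneg.2 b)]
  · have a : 3 * (M : ℝ) ≤ n := by exact_mod_cast (by omega : 3 * M ≤ n)
    constructor <;> linarith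

/-- Summation by parts on `{1, …, n + 1}`. -/
theorem sum_mul_by_parts (y x : ℕ → ℝ) (n : ℕ) :
    ∑ i ∈ Finset.Icc 1 (n + 1), y i * x i =
      (∑ i ∈ Finset.Icc 1 (n + 1), y i) * x (n + 1)
        - ∑ i ∈ Finset.Icc 1 n, (∑ j ∈ Finset.Icc 1 i, y j) * (x (i + 1) - x i) := by
  induction n with
  | zero => simp
  | succ k ih =>
    rw [Finset.sum_Icc_succ_top (by omega), ih,
      Finset.sum_Icc_succ_top (b := k + 1) (by omega) y,
      Finset.sum_Icc_succ_top (b := k) (by omega)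
        (fun i => (∑ j ∈ Finset.Icc 1 i, y j) * (x (i + 1) - x i))]
    ring


/-- **TV denoising of the perturbed staircase, `ε > 0`, large `λ` regime.**
`N = 4M`, blocks `l_k = {(k−1)M+1, …, kM}` (signals are indexed by `{1, …, N}`),
`y = −1` on `l₁`, `−ε` on `l₂`, `ε` on `l₃`, `1` on `l₄`. For `λ ≥ M(1 + ε)`, the unique
minimizer of `f_λ(x) = (1/2)‖y − x‖₂² + λ Σ_{i=1}^{N−1}|x_{i+1} − x_i|` is `0`. -/
theorem tv_staircase_pos_eps_large_lambda
    (M : ℕ) (hM : 1 ≤ M) (ε : ℝ) (hε0 : 0 < ε) (hε1 : ε < 1)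
    (y : ℕ → ℝ)
    (hy : ∀ i ∈ Finset.Icc 1 (4 * M),
      y i = if i ≤ M then -1 else if i ≤ 2 * M then -ε else if i ≤ 3 * M then ε else 1)
    (lam : ℝ) (hlam : M * (1 + ε) ≤ lam)
    (f : (ℕ → ℝ) → ℝ)
    (hf : ∀ x, f x = (1 / 2) * ∑ i ∈ Finset.Icc 1 (4 * M), (y i - x i) ^ 2
        + lam * ∑ i ∈ Finset.Icc 1 (4 * M - 1), |x (i + 1) - x i|) :
    (∀ x, f 0 ≤ f x) ∧
      ∀ x : ℕ → ℝ, (∀ z, f x ≤ f z) → ∀ i ∈ Finset.Icc 1 (4 * M), x i = 0 := by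
  obtain ⟨n, hn⟩ : ∃ n, 4 * M = n + 1 := ⟨4 * M - 1, by omega⟩
  have hS : ∑ i ∈ Finset.Icc 1 (4 * M), y i = 0 := by
    rw [sum_staircase M ε y hy _ le_rfl, if_neg (by omega), if_neg (by omega), if_neg (by omega)]
    push_cast
    ring
  have hdual : ∀ x : ℕ → ℝ, ∑ i ∈ Finset.Icc 1 (4 * M), y i * x i
      ≤ lam * ∑ i ∈ Finset.Icc 1 (4 * M - 1), |x (i + 1) - x i| := by
    intro x
    have hparts := sum_mul_by_parts y x n
    rw [← hn, hS, zero_mul, zero_sub, show n = 4 * M - 1 by omega] at hparts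
    rw [hparts, ← Finset.sum_neg_distrib, Finset.mul_sum]
    refine Finset.sum_le_sum fun i hi => ?_
    have hi' := Finset.mem_Icc.1 hi
    calc -((∑ j ∈ Finset.Icc 1 i, y j) * (x (i + 1) - x i))
        ≤ |(∑ j ∈ Finset.Icc 1 i, y j) * (x (i + 1) - x i)| := neg_le_abs _
      _ = |∑ j ∈ Finset.Icc 1 i, y j| * |x (i + 1) - x i| := abs_mul _ _
      _ ≤ lam * |x (i + 1) - x i| := by
          gcongr
          exact (abs_sum_staircase_le M ε hε0 y hy i (by omega)).trans hlam
  have key : ∀ x : ℕ → ℝ, f 0 + (1 / 2) * ∑ i ∈ Finset.Icc 1 (4 * M), x i ^ 2 ≤ f x := by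
    intro x
    have hsq : ∑ i ∈ Finset.Icc 1 (4 * M), (y i - x i) ^ 2
        = ∑ i ∈ Finset.Icc 1 (4 * M), y i ^ 2 - 2 * ∑ i ∈ Finset.Icc 1 (4 * M), y i * x i
          + ∑ i ∈ Finset.Icc 1 (4 * M), x i ^ 2 := by
      rw [Finset.mul_sum, ← Finset.sum_sub_distrib, ← Finset.sum_add_distrib]
      exact Finset.sum_congr rfl fun i _ => by ring
    have h0 : f 0 = (1 / 2) * ∑ i ∈ Finset.Icc 1 (4 * M), y i ^ 2 := by
      rw [hf]
      simp
    rw [h0, hf x, hsq]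
    linarith [hdual x]
  have hnonneg : ∀ x : ℕ → ℝ, 0 ≤ ∑ i ∈ Finset.Icc 1 (4 * M), x i ^ 2 := fun x =>
    Finset.sum_nonneg fun i _ => sq_nonneg (x i)
  refine ⟨fun x => by linarith [key x, hnonneg x], fun x hx i hi => ?_⟩
  have hzero : ∑ i ∈ Finset.Icc 1 (4 * M), x i ^ 2 = 0 := by
    linarith [key x, hnonneg x, hx 0]
  exact pow_eq_zero_iff two_ne_zero |>.1
    ((Finset.sum_eq_zero_iff_of_nonneg fun i _ => sq_nonneg (x i)).1 hzero i hi)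
end

section
/- TV denoising of the perturbed staircase, ε < 0, large λ regime: let M ≥ 1, N = 4M, −1 < ε < 0, and let y ∈ ℝ^N equal −1 on l₁, −ε on l₂, ε on l₃ and 1 on l₄. For every λ ≥ M, the unique minimizer of f_λ(x) = (1/2)‖y − x‖₂² + λ Σ_{i=1}^{N−1}|x_{i+1} − x_i| is x_λ⋆ = 0. -/
/-!
The point `0` is optimal because of a dual certificate. Let `Y n = y 1 + ⋯ + y n`. The partial sums
satisfy `Y (4M) = 0` and `|Y n| ≤ M ≤ λ`, so summation by parts (`sum_mul_eq_abel`) gives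
`∑ y i * x i = -∑ Y i * (x (i+1) - x i) ≤ λ * ∑ |x (i+1) - x i|`.
Expanding the square then yields `f x ≥ f 0 + (1/2) * ∑ (x i)^2`, which gives both that `0` is a
minimizer and that it is the only one.
-/

lemma sum_mul_eq_abel (N : ℕ) (y Y x : ℕ → ℝ) (h0 : Y 0 = 0)
    (hY : ∀ n < N, Y (n + 1) = Y n + y (n + 1)) (n : ℕ) (hn : n < N) :
    ∑ i ∈ Finset.Icc 1 (n + 1), y i * x i
      = Y (n + 1) * x (n + 1) - ∑ i ∈ Finset.Icc 1 n, Y i * (x (i + 1) - x i) := by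
  induction n with
  | zero => simp [hY 0 hn, h0]
  | succ k ih =>
    rw [Finset.sum_Icc_succ_top (by omega), ih (by omega),
      Finset.sum_Icc_succ_top (by omega : 1 ≤ k + 1), hY (k + 1) hn]
    ring

/-- The closed form of the partial sums `y 1 + ⋯ + y n` of the staircase, for `n ≤ 4M`. -/
def stairSum (M : ℕ) (ε : ℝ) (n : ℕ) : ℝ :=
  if n ≤ M then -n else if n ≤ 2 * M then -M - ε * (n - M)
  else if n ≤ 3 * M then -M - ε * M + ε * (n - 2 * M) else n - 4 * M

lemma stairSum_succ (M : ℕ) (hM : 1 ≤ M) (ε : ℝ) (n : ℕ) :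
    stairSum M ε (n + 1) = stairSum M ε n + (if n + 1 ≤ M then -1
      else if n + 1 ≤ 2 * M then -ε else if n + 1 ≤ 3 * M then ε else 1) := by
  unfold stairSum
  -- Consecutive indices lie in the same block, or `n` is the last index of a block.
  rcases (by omega : n + 1 ≤ M ∨ n = M ∨ (M < n ∧ n + 1 ≤ 2 * M) ∨ n = 2 * M ∨
      (2 * M < n ∧ n + 1 ≤ 3 * M) ∨ n = 3 * M ∨ 3 * M < n) with h | h | h | h | h | h | h
  all_goals
    try subst h
    push_cast
    split_ifs
  all_goals first
    | omega
    | ring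

lemma abs_stairSum_le (M : ℕ) (ε : ℝ) (hε0 : -1 < ε) (hε1 : ε < 0) (n : ℕ) (hn : n ≤ 4 * M) :
    |stairSum M ε n| ≤ M := by
  have hn' : (n : ℝ) ≤ 4 * M := by exact_mod_cast hn
  have hn0 : (0 : ℝ) ≤ n := n.cast_nonneg
  unfold stairSum
  rw [abs_le]
  split_ifs with h1 h2 h3
  · have h1' : (n : ℝ) ≤ M := by exact_mod_cast h1
    constructor <;> linarith
  · have a : (M : ℝ) ≤ n := by exact_mod_cast (by omega : M ≤ n)
    have b : (n : ℝ) ≤ 2 * M := by exact_mod_cast h2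
    constructor <;> nlinarith
  · have a : (2 * M : ℝ) ≤ n := by exact_mod_cast (by omega : 2 * M ≤ n)
    have b : (n : ℝ) ≤ 3 * M := by exact_mod_cast h3
    constructor <;> nlinarith
  · have a : (3 * M : ℝ) ≤ n := by exact_mod_cast (by omega : 3 * M ≤ n)
    constructor <;> linarith

/-- **TV denoising of the perturbed staircase, `ε < 0`, large `λ` regime.**
`N = 4M`, blocks `l_k = {(k−1)M+1, …, kM}` (signals are indexed by `{1, …, N}`),
`y = −1` on `l₁`, `−ε` on `l₂`, `ε` on `l₃`, `1` on `l₄`. For `λ ≥ M`, the unique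
minimizer of `f_λ(x) = (1/2)‖y − x‖₂² + λ Σ_{i=1}^{N−1}|x_{i+1} − x_i|` is `0`. -/
theorem tv_staircase_neg_eps_large_lambda
    (M : ℕ) (hM : 1 ≤ M) (ε : ℝ) (hε0 : -1 < ε) (hε1 : ε < 0)
    (y : ℕ → ℝ)
    (hy : ∀ i ∈ Finset.Icc 1 (4 * M),
      y i = if i ≤ M then -1 else if i ≤ 2 * M then -ε else if i ≤ 3 * M then ε else 1)
    (lam : ℝ) (hlam : (M : ℝ) ≤ lam)
    (f : (ℕ → ℝ) → ℝ)
    (hf : ∀ x, f x = (1 / 2) * ∑ i ∈ Finset.Icc 1 (4 * M), (y i - x i) ^ 2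
        + lam * ∑ i ∈ Finset.Icc 1 (4 * M - 1), |x (i + 1) - x i|) :
    (∀ x, f 0 ≤ f x) ∧
      ∀ x : ℕ → ℝ, (∀ z, f x ≤ f z) → ∀ i ∈ Finset.Icc 1 (4 * M), x i = 0 := by
  have key : ∀ x, f 0 + (1 / 2) * ∑ i ∈ Finset.Icc 1 (4 * M), (x i) ^ 2 ≤ f x := by
    intro x
    have habel := sum_mul_eq_abel (4 * M) y (stairSum M ε) x (by simp [stairSum])
      (fun n hn => by
        rw [stairSum_succ M hM, hy (n + 1) (Finset.mem_Icc.2 ⟨by omega, by omega⟩)])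
      (4 * M - 1) (by omega)
    have hend : stairSum M ε (4 * M) = 0 := by
      unfold stairSum
      rw [if_neg (by omega), if_neg (by omega), if_neg (by omega)]
      push_cast
      ring
    rw [show 4 * M - 1 + 1 = 4 * M by omega, hend] at habel
    have hdual : -∑ i ∈ Finset.Icc 1 (4 * M - 1), stairSum M ε i * (x (i + 1) - x i)
        ≤ lam * ∑ i ∈ Finset.Icc 1 (4 * M - 1), |x (i + 1) - x i| := by
      rw [← Finset.sum_neg_distrib, Finset.mul_sum]
      refine Finset.sum_le_sum fun i hi => ?_
      have hY := abs_stairSum_le M ε hε0 hε1 i (by have := Finset.mem_Icc.1 hi; omega)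
      calc -(stairSum M ε i * (x (i + 1) - x i)) ≤ |stairSum M ε i| * |x (i + 1) - x i| := by
            rw [← abs_mul]
            exact neg_le_abs _
        _ ≤ lam * |x (i + 1) - x i| := by gcongr; linarith
    have hsq : ∑ i ∈ Finset.Icc 1 (4 * M), (y i - x i) ^ 2
        = ∑ i ∈ Finset.Icc 1 (4 * M), (y i) ^ 2
          - 2 * ∑ i ∈ Finset.Icc 1 (4 * M), y i * x i
          + ∑ i ∈ Finset.Icc 1 (4 * M), (x i) ^ 2 := by
      rw [Finset.mul_sum, ← Finset.sum_sub_distrib, ← Finset.sum_add_distrib]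
      exact Finset.sum_congr rfl fun i _ => by ring
    rw [hf, hf, hsq]
    simp only [Pi.zero_apply, sub_zero, abs_zero, Finset.sum_const_zero, mul_zero]
    linarith
  refine ⟨fun x => ?_, fun x hx i hi => ?_⟩
  · have : 0 ≤ ∑ i ∈ Finset.Icc 1 (4 * M), (x i) ^ 2 := Finset.sum_nonneg fun i _ => sq_nonneg _
    linarith [key x]
  · have hle := Finset.single_le_sum (f := fun i => (x i) ^ 2) (fun i _ => sq_nonneg _) hi
    have h0 : (x i) ^ 2 ≤ 0 := by
      linarith [key x, hx 0]
    exact pow_eq_zero_iff two_ne_zero |>.1 (le_antisymm h0 (sq_nonneg _))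
end

section
/- Non-identifiability of the jump support for ε > 0: let M ≥ 1, N = 4M, 0 < ε < 1, x₀ = −1_{l₁} + 1_{l₄} ∈ ℝ^N, and y ∈ ℝ^N equal −1 on l₁, −ε on l₂, ε on l₃, 1 on l₄. For every λ ≥ 0, the unique minimizer x_λ⋆ of f_λ(x) = (1/2)‖y − x‖₂² + λ Σ_{i=1}^{N−1}|x_{i+1} − x_i| satisfies supp(Dᵀ x_λ⋆) ≠ supp(Dᵀ x₀), where (Dᵀx)_i = x_{i+1} − x_i for i = 1, …, N−1 and supp(v) = {i : v_i ≠ 0}. In particular, the jump support {M, 3M} of x₀ is never recovered, whatever the choice of λ. -/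
/-!
If the support of `Dᵀx` were `{M, 3M}`, the minimizer `x` would take three values `a`, `b`, `c` on
`l₁`, `l₂ ∪ l₃`, `l₄`, with `a ≠ b` and `b ≠ c`. It is compared only with signals that are constant
on each of the four blocks (`blockSignal`), on which the objective is the function `blockObjective`
of four real variables (`block_fidelity`, `block_variation`).

The levels must increase, `a < b < c`: otherwise one of them can be moved towards the mean
of the data on its piece without increasing the total variation (`block_first_jump_up`, `block_second_jump_up`). For
`a < b < c`, lowering `l₂` and raising `l₃` by a small `t > 0` leaves the total variation unchanged
and changes the data term by `M t (t - 2ε) < 0` (`not_minimal_of_increasing`), a contradiction.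
-/

/-- The signal equal to `p`, `q`, `r`, `s` on the blocks `l₁`, `l₂`, `l₃`, `l₄`. -/
def blockSignal (M : ℕ) (p q r s : ℝ) (i : ℕ) : ℝ :=
  if i ≤ M then p else if i ≤ 2 * M then q else if i ≤ 3 * M then r else s

/-- The TV-denoising objective at the signal with block values `p`, `q`, `r`, `s`; here `m` is the
block length. -/
noncomputable def blockObjective (m ε lam p q r s : ℝ) : ℝ :=
  m / 2 * ((-1 - p) ^ 2 + (-ε - q) ^ 2 + (ε - r) ^ 2 + (1 - s) ^ 2)
    + lam * (|q - p| + |r - q| + |s - r|)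

lemma block_sum (M : ℕ) (A B C E : ℝ) :
    ∑ i ∈ Finset.Icc 1 (4 * M), blockSignal M A B C E i = M * (A + B + C + E) := by
  have hI : Finset.Icc 1 (4 * M) = Finset.Ioc 0 (4 * M) := by ext; simp; omega
  have h1 : ∑ i ∈ Finset.Ioc 0 M, blockSignal M A B C E i = M * A := by
    rw [Finset.sum_congr rfl (g := fun _ => A)]
    · simp
    · intro i hi
      rw [Finset.mem_Ioc] at hi
      simp [blockSignal, hi.2]
  have h2 : ∑ i ∈ Finset.Ioc M (2 * M), blockSignal M A B C E i = M * B := by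
    rw [Finset.sum_congr rfl (g := fun _ => B)]
    · simp [show 2 * M - M = M by omega]
    · intro i hi
      rw [Finset.mem_Ioc] at hi
      simp [blockSignal, hi.2, show ¬ i ≤ M by omega]
  have h3 : ∑ i ∈ Finset.Ioc (2 * M) (3 * M), blockSignal M A B C E i = M * C := by
    rw [Finset.sum_congr rfl (g := fun _ => C)]
    · simp [show 3 * M - 2 * M = M by omega]
    · intro i hi
      rw [Finset.mem_Ioc] at hi
      simp [blockSignal, hi.2, show ¬ i ≤ M by omega, show ¬ i ≤ 2 * M by omega]
  have h4 : ∑ i ∈ Finset.Ioc (3 * M) (4 * M), blockSignal M A B C E i = M * E := by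
    rw [Finset.sum_congr rfl (g := fun _ => E)]
    · simp [show 4 * M - 3 * M = M by omega]
    · intro i hi
      rw [Finset.mem_Ioc] at hi
      simp [blockSignal, show ¬ i ≤ M by omega, show ¬ i ≤ 2 * M by omega,
        show ¬ i ≤ 3 * M by omega]
  rw [hI, ← Finset.sum_Ioc_consecutive _ (Nat.zero_le (3 * M)) (by omega),
    ← Finset.sum_Ioc_consecutive _ (Nat.zero_le (2 * M)) (by omega),
    ← Finset.sum_Ioc_consecutive _ (Nat.zero_le M) (by omega), h1, h2, h3, h4]
  ring

lemma block_fidelity (M : ℕ) (A B C E p q r s : ℝ) :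
    ∑ i ∈ Finset.Icc 1 (4 * M), (blockSignal M A B C E i - blockSignal M p q r s i) ^ 2
      = M * ((A - p) ^ 2 + (B - q) ^ 2 + (C - r) ^ 2 + (E - s) ^ 2) := by
  rw [← block_sum]
  refine Finset.sum_congr rfl fun i _ => ?_
  unfold blockSignal
  split_ifs <;> rfl

lemma block_variation (M : ℕ) (hM : 1 ≤ M) (p q r s : ℝ) :
    ∑ i ∈ Finset.Icc 1 (4 * M - 1), |blockSignal M p q r s (i + 1) - blockSignal M p q r s i|
      = |q - p| + |r - q| + |s - r| := by
  have key : ∀ i ∈ Finset.Icc 1 (4 * M - 1),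
      |blockSignal M p q r s (i + 1) - blockSignal M p q r s i|
        = (if i = M then |q - p| else 0) + (if i = 2 * M then |r - q| else 0)
          + (if i = 3 * M then |s - r| else 0) := by
    intro i _
    unfold blockSignal
    split_ifs <;> first | omega | simp
  rw [Finset.sum_congr rfl key, Finset.sum_add_distrib, Finset.sum_add_distrib]
  simp only [Finset.sum_ite_eq', Finset.mem_Icc]
  rw [if_pos (by omega), if_pos (by omega), if_pos (by omega)]

/-- A downward first jump is never optimal: unless `a ≤ -1`, lowering `a` helps, and if
`b < a ≤ -1`, raising the smaller of `b` and `c` helps. -/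
lemma block_first_jump_up {m ε lam a b c : ℝ} (hm : 0 < m) (hlam : 0 ≤ lam)
    (hmin : ∀ p q r s, blockObjective m ε lam a b b c ≤ blockObjective m ε lam p q r s)
    (hbc : b ≠ c) : a ≤ b := by
  unfold blockObjective at hmin
  by_contra! hab
  have ha : a ≤ -1 := by
    by_contra! ha
    have hl : lam * |b - max b (-1)| ≤ lam * |b - a| := by
      refine mul_le_mul_of_nonneg_left ?_ hlam
      rw [abs_of_nonpos (by simp), abs_of_neg (by linarith)]
      linarith [max_le hab.le ha.le]
    have hq : m * (-1 - max b (-1)) ^ 2 < m * (-1 - a) ^ 2 := by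
      refine mul_lt_mul_of_pos_left ?_ hm
      nlinarith [max_lt hab ha, le_max_right b (-1)]
    linarith [hmin (max b (-1)) b b c]
  rcases lt_or_gt_of_ne hbc with h | h
  -- The value on `l₂ ∪ l₃` is raised to `min a c`, still below the data mean `0` there.
  · have hu : b < min a c := lt_min hab h
    have hua := min_le_left a c
    have huc := min_le_right a c
    set u := min a c
    have hl : lam * (|u - a| + |c - u|) ≤ lam * (|b - a| + |c - b|) := by
      refine mul_le_mul_of_nonneg_left ?_ hlam
      rw [abs_of_nonpos (by linarith), abs_of_nonneg (by linarith),
        abs_of_nonpos (by linarith), abs_of_nonneg (by linarith)]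
      linarith
    have hq : m * u ^ 2 < m * b ^ 2 := by
      refine mul_lt_mul_of_pos_left ?_ hm
      nlinarith
    have := hmin a u u c
    rw [sub_self, sub_self] at this
    nlinarith
  -- The value on `l₄` is raised to `b`, which is still below the data value `1`.
  · have hl : 0 ≤ lam * |c - b| := by positivity
    have hq : m * (1 - b) ^ 2 < m * (1 - c) ^ 2 := by
      refine mul_lt_mul_of_pos_left ?_ hm
      nlinarith
    have := hmin a b b b
    rw [sub_self, abs_zero] at this
    linarith

/-- Reversing and negating the levels exchanges the two jumps. -/
lemma block_second_jump_up {m ε lam a b c : ℝ} (hm : 0 < m) (hlam : 0 ≤ lam)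
    (hmin : ∀ p q r s, blockObjective m ε lam a b b c ≤ blockObjective m ε lam p q r s)
    (hab : a ≠ b) : b ≤ c := by
  have hsymm : ∀ p q r s, blockObjective m ε lam p q r s
      = blockObjective m ε lam (-s) (-r) (-q) (-p) := by
    intro p q r s
    unfold blockObjective
    rw [show -r - -s = s - r by ring, show -q - -r = r - q by ring, show -p - -q = q - p by ring]
    ring
  have h : -c ≤ -b := by
    refine block_first_jump_up (c := -a) (ε := ε) hm hlam (fun p q r s => ?_) ?_
    · rw [← hsymm, hsymm p q r s]
      exact hmin _ _ _ _
    · intro h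
      exact hab (neg_injective h).symm
  linarith

/-- On strictly increasing levels, lowering `l₂` and raising `l₃` by the same small amount decreases
the objective: this is where `ε > 0` enters. -/
lemma not_minimal_of_increasing {m ε lam a b c : ℝ} (hm : 0 < m) (hε : 0 < ε)
    (hab : a < b) (hbc : b < c) :
    ∃ p q r s, blockObjective m ε lam p q r s < blockObjective m ε lam a b b c := by
  -- `t ≤ b - a` and `t ≤ c - b` keep the signal increasing; `t ≤ ε` makes `t (t - 2ε)` negative.
  obtain ⟨t, ht, h1, h2, h3⟩ : ∃ t, 0 < t ∧ t ≤ b - a ∧ t ≤ c - b ∧ t ≤ ε :=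
    ⟨min (b - a) (min (c - b) ε), lt_min (by linarith) (lt_min (by linarith) hε),
      min_le_left _ _, (min_le_right _ _).trans (min_le_left _ _),
      (min_le_right _ _).trans (min_le_right _ _)⟩
  refine ⟨a, b - t, b + t, c, ?_⟩
  unfold blockObjective
  rw [abs_of_nonneg (show 0 ≤ b - t - a by linarith),
    abs_of_nonneg (show 0 ≤ b + t - (b - t) by linarith),
    abs_of_nonneg (show 0 ≤ c - (b + t) by linarith),
    abs_of_pos (show 0 < b - a by linarith), sub_self, abs_zero,
    abs_of_pos (show 0 < c - b by linarith)]
  have : 0 < m * (t * (2 * ε - t)) := mul_pos hm (mul_pos ht (by linarith))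
  linarith


/-- **Non-identifiability of the jump support for `ε > 0`.**
`N = 4M`, blocks `l_k = {(k−1)M+1, …, kM}` (signals are indexed by `{1, …, N}`),
`x₀ = −1_{l₁} + 1_{l₄}`, and `y = −1` on `l₁`, `−ε` on `l₂`, `ε` on `l₃`, `1` on `l₄`.
For every `λ ≥ 0`, the unique minimizer `x` of
`f_λ(x) = (1/2)‖y − x‖₂² + λ Σ_{i=1}^{N−1}|x_{i+1} − x_i|` satisfies
`supp(Dᵀx) ≠ supp(Dᵀx₀)` where `(Dᵀx)_i = x_{i+1} − x_i`: the jump support `{M, 3M}`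
of `x₀` is never recovered, whatever the choice of `λ`. -/
theorem tv_staircase_pos_eps_support_never_recovered
    (M : ℕ) (hM : 1 ≤ M) (ε : ℝ) (hε0 : 0 < ε) (hε1 : ε < 1)
    (y : ℕ → ℝ)
    (hy : ∀ i ∈ Finset.Icc 1 (4 * M),
      y i = if i ≤ M then -1 else if i ≤ 2 * M then -ε else if i ≤ 3 * M then ε else 1)
    (x₀ : ℕ → ℝ)
    (hx₀ : ∀ i ∈ Finset.Icc 1 (4 * M),
      x₀ i = if i ≤ M then -1 else if i ≤ 3 * M then 0 else 1)
    (lam : ℝ) (hlam : 0 ≤ lam)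
    (f : (ℕ → ℝ) → ℝ)
    (hf : ∀ x, f x = (1 / 2) * ∑ i ∈ Finset.Icc 1 (4 * M), (y i - x i) ^ 2
        + lam * ∑ i ∈ Finset.Icc 1 (4 * M - 1), |x (i + 1) - x i|)
    (x : ℕ → ℝ) (hx : ∀ z, f x ≤ f z) :
    {i : ℕ | 1 ≤ i ∧ i ≤ 4 * M - 1 ∧ x (i + 1) - x i ≠ 0}
      ≠ {i : ℕ | 1 ≤ i ∧ i ≤ 4 * M - 1 ∧ x₀ (i + 1) - x₀ i ≠ 0} := by
  intro hsupp
  have hm : (0 : ℝ) < M := by exact_mod_cast hM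
  have hx₀' : ∀ i, 1 ≤ i → i ≤ 4 * M →
      x₀ i = if i ≤ M then -1 else if i ≤ 3 * M then 0 else 1 :=
    fun i h1 h2 => hx₀ i (Finset.mem_Icc.2 ⟨h1, h2⟩)
  have hjump : ∀ i, 1 ≤ i → i ≤ 4 * M - 1 → (x (i + 1) ≠ x i ↔ i = M ∨ i = 3 * M) := by
    intro i h1 h2
    have h := Set.ext_iff.1 hsupp i
    simp only [Set.mem_ofPred_eq, h1, h2, true_and, sub_ne_zero] at h
    rw [h, hx₀' i h1 (by omega), hx₀' (i + 1) (by omega) (by omega)]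
    split_ifs <;> first | omega | (norm_num; omega)
  have hconst : ∀ k l, 1 ≤ k → l ≤ 4 * M → (∀ i, k ≤ i → i < l → i ≠ M ∧ i ≠ 3 * M) →
      ∀ i, k ≤ i → i ≤ l → x i = x k := by
    intro k l hk hl hne i hki
    induction i, hki using Nat.le_induction with
    | base => intro _; rfl
    | succ i hki ih =>
      intro hil
      rw [← ih (by omega)]
      by_contra h
      have := (hjump i (by omega) (by omega)).1 h
      have := hne i hki (by omega)
      tauto
  have c1 := hconst 1 M le_rfl (by omega) (by omega)
  have c2 := hconst (M + 1) (3 * M) (by omega) (by omega) (by omega)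
  have c3 := hconst (3 * M + 1) (4 * M) (by omega) (by omega) (by omega)
  have hab : x 1 ≠ x (M + 1) := by
    rw [← c1 M hM le_rfl]
    exact ((hjump M hM (by omega)).2 (Or.inl rfl)).symm
  have hbc : x (M + 1) ≠ x (3 * M + 1) := by
    rw [← c2 (3 * M) (by omega) le_rfl]
    exact ((hjump (3 * M) (by omega) (by omega)).2 (Or.inr rfl)).symm
  have hblock : ∀ p q r s, f (blockSignal M p q r s) = blockObjective M ε lam p q r s := by
    intro p q r s
    rw [hf, block_variation M hM, Finset.sum_congr rfl (g := fun i =>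
      (blockSignal M (-1) (-ε) ε 1 i - blockSignal M p q r s i) ^ 2), block_fidelity]
    · unfold blockObjective
      ring
    · intro i hi
      rw [hy i hi]
      rfl
  have hxz : ∀ i, 1 ≤ i → i ≤ 4 * M →
      x i = blockSignal M (x 1) (x (M + 1)) (x (M + 1)) (x (3 * M + 1)) i := by
    intro i h1 h2
    unfold blockSignal
    split_ifs
    · exact c1 i h1 (by omega)
    · exact c2 i (by omega) (by omega)
    · exact c2 i (by omega) (by omega)
    · exact c3 i (by omega) (by omega)
  have hfx : f x = blockObjective M ε lam (x 1) (x (M + 1)) (x (M + 1)) (x (3 * M + 1)) := by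
    rw [← hblock, hf, hf]
    congr 2
    · refine Finset.sum_congr rfl fun i hi => ?_
      rw [Finset.mem_Icc] at hi
      rw [← hxz i hi.1 hi.2]
    · refine Finset.sum_congr rfl fun i hi => ?_
      rw [Finset.mem_Icc] at hi
      rw [← hxz i hi.1 (by omega), ← hxz (i + 1) (by omega) (by omega)]
  have hmin : ∀ p q r s, blockObjective M ε lam (x 1) (x (M + 1)) (x (M + 1)) (x (3 * M + 1))
      ≤ blockObjective M ε lam p q r s := by
    intro p q r s
    rw [← hfx, ← hblock]
    exact hx _
  have hlt1 := lt_of_le_of_ne (block_first_jump_up hm hlam hmin hbc) hab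
  have hlt2 := lt_of_le_of_ne (block_second_jump_up hm hlam hmin hab) hbc
  obtain ⟨p, q, r, s, h⟩ := not_minimal_of_increasing (lam := lam) hm hε0 hlt1 hlt2
  exact absurd (hmin p q r s) (not_le.2 h)
end

section
/- Exact recovery of the jump support and signs for ε < 0: let M ≥ 1, N = 4M, −1 < ε < 0, x₀ = −1_{l₁} + 1_{l₄} ∈ ℝ^N, and y ∈ ℝ^N equal −1 on l₁, −ε on l₂, ε on l₃, 1 on l₄. For every λ with −εM/2 ≤ λ < M, the unique minimizer x_λ⋆ of f_λ(x) = (1/2)‖y − x‖₂² + λ Σ_{i=1}^{N−1}|x_{i+1} − x_i| satisfies supp(Dᵀ x_λ⋆) = supp(Dᵀ x₀) = {M, 3M} and sign((Dᵀ x_λ⋆)_i) = sign((Dᵀ x₀)_i) for every i ∈ {1, …, N−1}, where (Dᵀx)_i = x_{i+1} − x_i and supp(v) = {i : v_i ≠ 0}. -/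
/-!
The proof exhibits the minimizer together with a dual certificate. With `a = λ / M`, the candidate
is `c = -(1 - a)` on the first block, `0` on the two middle blocks and `1 - a` on the last one.
Its certificate is `U i = ∑_{j ≤ i} (c j - y j)`, the cumulative sum of the residual: it vanishes at
both ends, equals `λ` at the two jumps `M` and `3M`, and satisfies `|U| ≤ λ`. In between it is
piecewise linear, with its minimum on the middle blocks at `2M`, where it is `λ + εM`; this
is where the hypothesis `-εM/2 ≤ λ` is needed. Summation by parts turns these properties into
`f c + (1/2) ‖x - c‖² ≤ f x` for every `x` (`tv_gap`), so a minimizer agrees with `c` on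
`{1, …, 4M}`, and the jumps of `c` are `1 - a > 0` at `M` and `3M` and `0` elsewhere.
-/

/-- Summation by parts on `{1, …, n + 1}`, before boundary values of `U` are prescribed. -/
lemma sum_by_parts (U w : ℕ → ℝ) (n : ℕ) :
    ∑ i ∈ Finset.Icc 1 (n + 1), (U i - U (i - 1)) * w i
      = U (n + 1) * w (n + 1) - U 0 * w 1
        - ∑ i ∈ Finset.Icc 1 n, U i * (w (i + 1) - w i) := by
  induction n with
  | zero => simp; ring
  | succ n ih =>
    rw [Finset.sum_Icc_succ_top (by omega), ih, Finset.sum_Icc_succ_top (by omega)]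
    simp only [Nat.add_sub_cancel]
    ring

/-- Quadratic growth of the total-variation objective around a point `c` carrying a dual
certificate `U`: the increments of `U` are the residual `c - y`, and `U` is `lam` times a
subgradient of the absolute value at each jump of `c`. -/
lemma tv_gap (n : ℕ) (y c U : ℕ → ℝ) (lam : ℝ)
    (hU0 : U 0 = 0) (hUn : U (n + 1) = 0)
    (hres : ∀ i ∈ Finset.Icc 1 (n + 1), c i - y i = U i - U (i - 1))
    (hbd : ∀ i ∈ Finset.Icc 1 n, |U i| ≤ lam)
    (hc : ∀ i ∈ Finset.Icc 1 n, lam * |c (i + 1) - c i| = U i * (c (i + 1) - c i))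
    (x : ℕ → ℝ) :
    (1 / 2) * ∑ i ∈ Finset.Icc 1 (n + 1), (y i - c i) ^ 2
        + lam * ∑ i ∈ Finset.Icc 1 n, |c (i + 1) - c i|
        + (1 / 2) * ∑ i ∈ Finset.Icc 1 (n + 1), (x i - c i) ^ 2
      ≤ (1 / 2) * ∑ i ∈ Finset.Icc 1 (n + 1), (y i - x i) ^ 2
        + lam * ∑ i ∈ Finset.Icc 1 n, |x (i + 1) - x i| := by
  have hparts := sum_by_parts U (fun i => x i - c i) n
  rw [hU0, hUn] at hparts
  have hquad : (1 / 2) * ∑ i ∈ Finset.Icc 1 (n + 1), (y i - x i) ^ 2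
      = (1 / 2) * ∑ i ∈ Finset.Icc 1 (n + 1), (y i - c i) ^ 2
        + (1 / 2) * ∑ i ∈ Finset.Icc 1 (n + 1), (x i - c i) ^ 2
        + ∑ i ∈ Finset.Icc 1 (n + 1), (U i - U (i - 1)) * (x i - c i) := by
    simp only [Finset.mul_sum, ← Finset.sum_add_distrib]
    refine Finset.sum_congr rfl fun i hi => ?_
    rw [← hres i hi]
    ring
  have htv : lam * ∑ i ∈ Finset.Icc 1 n, |c (i + 1) - c i|
      + ∑ i ∈ Finset.Icc 1 n, U i * ((x (i + 1) - c (i + 1)) - (x i - c i))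
      ≤ lam * ∑ i ∈ Finset.Icc 1 n, |x (i + 1) - x i| := by
    simp only [Finset.mul_sum, ← Finset.sum_add_distrib]
    refine Finset.sum_le_sum fun i hi => ?_
    have h1 : U i * (x (i + 1) - x i) ≤ lam * |x (i + 1) - x i| :=
      (le_abs_self _).trans ((abs_mul _ _).trans_le
        (mul_le_mul_of_nonneg_right (hbd i hi) (abs_nonneg _)))
    rw [hc i hi]
    linarith
  linarith


/-- **Exact recovery of the jump support and signs for `ε < 0`.**
`N = 4M`, blocks `l_k = {(k−1)M+1, …, kM}` (signals are indexed by `{1, …, N}`),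
`x₀ = −1_{l₁} + 1_{l₄}`, and `y = −1` on `l₁`, `−ε` on `l₂`, `ε` on `l₃`, `1` on `l₄`.
For every `λ` with `−εM/2 ≤ λ < M`, the unique minimizer `x` of
`f_λ(x) = (1/2)‖y − x‖₂² + λ Σ_{i=1}^{N−1}|x_{i+1} − x_i|` satisfies
`supp(Dᵀx) = supp(Dᵀx₀) = {M, 3M}` and `sign((Dᵀx)_i) = sign((Dᵀx₀)_i)` for every
`i ∈ {1, …, N−1}`, where `(Dᵀx)_i = x_{i+1} − x_i`. -/
theorem tv_staircase_neg_eps_support_sign_recovered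
    (M : ℕ) (hM : 1 ≤ M) (ε : ℝ) (hε0 : -1 < ε) (hε1 : ε < 0)
    (y : ℕ → ℝ)
    (hy : ∀ i ∈ Finset.Icc 1 (4 * M),
      y i = if i ≤ M then -1 else if i ≤ 2 * M then -ε else if i ≤ 3 * M then ε else 1)
    (x₀ : ℕ → ℝ)
    (hx₀ : ∀ i ∈ Finset.Icc 1 (4 * M),
      x₀ i = if i ≤ M then -1 else if i ≤ 3 * M then 0 else 1)
    (lam : ℝ) (hlam0 : -ε * M / 2 ≤ lam) (hlam1 : lam < M)
    (f : (ℕ → ℝ) → ℝ)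
    (hf : ∀ x, f x = (1 / 2) * ∑ i ∈ Finset.Icc 1 (4 * M), (y i - x i) ^ 2
        + lam * ∑ i ∈ Finset.Icc 1 (4 * M - 1), |x (i + 1) - x i|)
    (x : ℕ → ℝ) (hx : ∀ z, f x ≤ f z) :
    {i : ℕ | 1 ≤ i ∧ i ≤ 4 * M - 1 ∧ x (i + 1) - x i ≠ 0}
        = {i : ℕ | 1 ≤ i ∧ i ≤ 4 * M - 1 ∧ x₀ (i + 1) - x₀ i ≠ 0} ∧
    {i : ℕ | 1 ≤ i ∧ i ≤ 4 * M - 1 ∧ x₀ (i + 1) - x₀ i ≠ 0} = {M, 3 * M} ∧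
    ∀ i ∈ Finset.Icc 1 (4 * M - 1),
      Real.sign (x (i + 1) - x i) = Real.sign (x₀ (i + 1) - x₀ i) := by
  have hM0 : (0 : ℝ) < M := by exact_mod_cast hM
  obtain ⟨n, hn⟩ : ∃ n, 4 * M = n + 1 := ⟨4 * M - 1, by omega⟩
  have hn' : 4 * M - 1 = n := by omega
  obtain ⟨a, rfl⟩ : ∃ a : ℝ, lam = a * M := ⟨lam / M, by field_simp⟩
  have ha1 : a < 1 := by nlinarith
  have ha0 : 0 < a := by nlinarith
  -- `c` is the explicit minimizer, `U` the cumulative sum of `c - y`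
  let c : ℕ → ℝ := fun i => if i ≤ M then -(1 - a) else if i ≤ 3 * M then 0 else 1 - a
  let U : ℕ → ℝ := fun i =>
    if i ≤ M then a * i else if i ≤ 2 * M then a * M + ε * (i - M)
    else if i ≤ 3 * M then a * M - ε * (i - 3 * M) else a * (4 * M - i)
  have hU0 : U 0 = 0 := by simp [U]
  have hUn : U (n + 1) = 0 := by
    have h1 : ¬ (4 * M ≤ M) := by omega
    have h2 : ¬ (4 * M ≤ 2 * M) := by omega
    have h3 : ¬ (4 * M ≤ 3 * M) := by omega
    rw [← hn]
    simp only [U, if_neg h1, if_neg h2, if_neg h3]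
    push_cast
    ring
  have hres : ∀ i ∈ Finset.Icc 1 (n + 1), c i - y i = U i - U (i - 1) := by
    intro i hi
    rw [hy i (hn ▸ hi)]
    obtain ⟨k, rfl⟩ : ∃ k, i = k + 1 := ⟨i - 1, by have := (Finset.mem_Icc.1 hi).1; omega⟩
    simp only [c, U, Nat.add_sub_cancel]
    -- where `k` and `k + 1` lie in different blocks, `k` is the last index of its block,
    -- and the two affine formulas for `U k` agree
    rcases lt_or_ge k M with h | h
    · rw [if_pos (by omega), if_pos (by omega), if_pos (by omega), if_pos (by omega)]
      push_cast
      ring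
    rcases lt_or_ge k (2 * M) with h' | h'
    · have e : (if k ≤ M then a * (k : ℝ) else if k ≤ 2 * M then a * M + ε * (k - M)
          else if k ≤ 3 * M then a * M - ε * (k - 3 * M) else a * (4 * M - k))
          = a * M + ε * (k - M) := by
        rcases h.eq_or_lt with rfl | h1
        · simp
        · rw [if_neg (by omega), if_pos (by omega)]
      rw [e, if_neg (by omega), if_pos (by omega), if_neg (by omega), if_pos (by omega),
        if_neg (by omega), if_pos (by omega)]
      push_cast
      ring
    rcases lt_or_ge k (3 * M) with h'' | h''
    · have e : (if k ≤ M then a * (k : ℝ) else if k ≤ 2 * M then a * M + ε * (k - M)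
          else if k ≤ 3 * M then a * M - ε * (k - 3 * M) else a * (4 * M - k))
          = a * M - ε * (k - 3 * M) := by
        rcases h'.eq_or_lt with rfl | h1
        · rw [if_neg (by omega), if_pos le_rfl]
          push_cast
          ring
        · rw [if_neg (by omega), if_neg (by omega), if_pos (by omega)]
      rw [e, if_neg (by omega), if_pos (by omega), if_neg (by omega), if_neg (by omega),
        if_pos (by omega), if_neg (by omega), if_neg (by omega), if_pos (by omega)]
      push_cast
      ring
    · have e : (if k ≤ M then a * (k : ℝ) else if k ≤ 2 * M then a * M + ε * (k - M)
          else if k ≤ 3 * M then a * M - ε * (k - 3 * M) else a * (4 * M - k))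
          = a * (4 * M - k) := by
        rcases h''.eq_or_lt with rfl | h1
        · rw [if_neg (by omega), if_neg (by omega), if_pos le_rfl]
          push_cast
          ring
        · rw [if_neg (by omega), if_neg (by omega), if_neg (by omega)]
      rw [e, if_neg (by omega), if_neg (by omega), if_neg (by omega), if_neg (by omega),
        if_neg (by omega), if_neg (by omega), if_neg (by omega), if_neg (by omega)]
      push_cast
      ring
  have hbd : ∀ i ∈ Finset.Icc 1 n, |U i| ≤ a * M := by
    intro i hi
    have hiN : (i : ℝ) ≤ 4 * M := by
      have := (Finset.mem_Icc.1 hi).2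
      exact_mod_cast (by omega : i ≤ 4 * M)
    have hi0 : (0 : ℝ) ≤ i := Nat.cast_nonneg i
    simp only [U]
    rw [abs_le]
    split_ifs with h1 h2 h3
    · have h1' : (i : ℝ) ≤ M := by exact_mod_cast h1
      constructor <;> nlinarith
    · have h1' : (M : ℝ) ≤ i := by exact_mod_cast (not_le.1 h1).le
      have h2' : (i : ℝ) ≤ 2 * M := by exact_mod_cast h2
      constructor <;> nlinarith
    · have h2' : (2 * M : ℝ) ≤ i := by exact_mod_cast (not_le.1 h2).le
      have h3' : (i : ℝ) ≤ 3 * M := by exact_mod_cast h3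
      constructor <;> nlinarith
    · have h3' : (3 * M : ℝ) ≤ i := by exact_mod_cast (not_le.1 h3).le
      constructor <;> nlinarith
  have hDc : ∀ i, c (i + 1) - c i = if i = M ∨ i = 3 * M then 1 - a else 0 := by
    intro i
    simp only [c]
    split_ifs <;> first | omega | ring
  have hDx₀ : ∀ i ∈ Finset.Icc 1 n,
      x₀ (i + 1) - x₀ i = if i = M ∨ i = 3 * M then 1 else 0 := by
    intro i hi
    rw [Finset.mem_Icc] at hi
    rw [hx₀ i (Finset.mem_Icc.2 (by omega)), hx₀ (i + 1) (Finset.mem_Icc.2 (by omega))]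
    split_ifs <;> first | omega | ring
  have hc : ∀ i ∈ Finset.Icc 1 n, a * M * |c (i + 1) - c i| = U i * (c (i + 1) - c i) := by
    intro i _
    rw [hDc]
    split_ifs with h
    · have hUi : U i = a * M := by
        rcases h with rfl | rfl
        · simp [U]
        · simp only [U]
          rw [if_neg (by omega), if_neg (by omega), if_pos le_rfl]
          push_cast
          ring
      rw [hUi, abs_of_pos (by linarith)]
    · simp
  have hxc : ∀ i ∈ Finset.Icc 1 (n + 1), x i = c i := by
    have hgap := tv_gap n y c U (a * M) hU0 hUn hres hbd hc x
    have hmin := hx c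
    rw [hf, hf, hn', hn] at hmin
    have hnn : ∀ i ∈ Finset.Icc 1 (n + 1), 0 ≤ (x i - c i) ^ 2 := fun i _ => sq_nonneg _
    have hzero : ∑ i ∈ Finset.Icc 1 (n + 1), (x i - c i) ^ 2 = 0 :=
      le_antisymm (by linarith) (Finset.sum_nonneg hnn)
    intro i hi
    have := (Finset.sum_eq_zero_iff_of_nonneg hnn).1 hzero i hi
    exact sub_eq_zero.1 (pow_eq_zero_iff two_ne_zero |>.1 this)
  have hDx : ∀ i ∈ Finset.Icc 1 n,
      x (i + 1) - x i = if i = M ∨ i = 3 * M then 1 - a else 0 := by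
    intro i hi
    rw [Finset.mem_Icc] at hi
    rw [hxc i (Finset.mem_Icc.2 (by omega)), hxc (i + 1) (Finset.mem_Icc.2 (by omega)), hDc]
  rw [hn']
  refine ⟨?_, ?_, fun i hi => ?_⟩
  · ext i
    simp only [Set.mem_setOf_eq]
    refine and_congr_right fun h1 => and_congr_right fun h2 => ?_
    rw [hDx i (Finset.mem_Icc.2 ⟨h1, h2⟩), hDx₀ i (Finset.mem_Icc.2 ⟨h1, h2⟩)]
    split_ifs
    · simp [(sub_pos.2 ha1).ne']
    · rfl
  · ext i
    simp only [Set.mem_setOf_eq, Set.mem_insert_iff, Set.mem_singleton_iff]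
    constructor
    · rintro ⟨h1, h2, h3⟩
      rw [hDx₀ i (Finset.mem_Icc.2 ⟨h1, h2⟩)] at h3
      by_contra h
      exact h3 (if_neg h)
    · intro h
      have h1 : 1 ≤ i := by omega
      have h2 : i ≤ n := by omega
      refine ⟨h1, h2, ?_⟩
      rw [hDx₀ i (Finset.mem_Icc.2 ⟨h1, h2⟩), if_pos h]
      exact one_ne_zero
  · rw [hDx i hi, hDx₀ i hi]
    split_ifs
    · rw [Real.sign_of_pos (sub_pos.2 ha1), Real.sign_of_pos one_pos]
    · rfl
end
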